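/- Let q be an odd prime power, let G = GL(2, 𝔽_q) be the general linear group of degree 2 over the field with q elements, and let P be a Sylow 2-subgroup of G. Then for every irreducible complex character χ of G, the restriction χ_P is a sum of characters of the form λ^P induced from irreducible characters λ of subgroups Q ≤ P with χ(1)_2 = |P : Q|. -/

import Mathlib

open scoped Classical

/-- The induced character (as a class function formula): for `f` a function on a
subgroup `H` of a finite group `G`, `inducedChar H f g = (1/|H|) ∑_{x ∈ G, xgx⁻¹ ∈ H} f (xgx⁻¹)`. -/
noncomputable def inducedChar {G : Type*} [Group G] [Fintype G] (H : Subgroup G)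
    (f : H → ℂ) : G → ℂ :=
  fun g => (Fintype.card H : ℂ)⁻¹ *
    ∑ x : G, if h : x * g * x⁻¹ ∈ H then f ⟨x * g * x⁻¹, h⟩ else 0

/-- `χ` is the character of an irreducible complex representation of `G`. -/
def IsIrreducibleCharacter {G : Type} [Group G] (χ : G → ℂ) : Prop :=
  ∃ V : FDRep ℂ G, CategoryTheory.Simple V ∧ χ = FDRep.character V

/-- The restriction of `χ` (a character of degree `d` of the ambient group `G`) to the
subgroup `P` is a sum of characters `λ^P` induced from irreducible characters `λ` of
subgroups `Q ≤ P` satisfying `d_p = |P : Q|` (the `p`-part of the degree equals the index). -/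
def SumInducedProperty (p : ℕ) {G : Type} [Group G] [Fintype G] (P : Subgroup G)
    (χ : G → ℂ) (d : ℕ) : Prop :=
  ∃ (n : ℕ) (Q : Fin n → Subgroup ↥P) (lam : (i : Fin n) → ↥(Q i) → ℂ),
    (∀ i, IsIrreducibleCharacter (lam i)) ∧
    (∀ i, p ^ (d.factorization p) = (Q i).index) ∧
    (∀ x : ↥P, χ ↑x = ∑ i, inducedChar (Q i) (lam i) x)

/-!
An irreducible representation of `GL₂(F)`, `q = |F|`, has degree `1`, `q` or `q + 1` when the upper
unitriangular matrices fix a nonzero vector, and degree `q - 1` when it is cuspidal: by Gelfand's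
trick every nontrivial character of the unitriangular group has multiplicity at most one.

Characters of odd degree need only `Q = P`. One of degree `q + 1` is monomial over `GL₂(F) / B`,
with `B` the upper triangular matrices. Its restriction to `P` splits along the `P`-orbits, whose
lengths are multiples of `(q + 1)₂`, and a monomial character of a `2`-group can be induced in
stages through a subgroup of the required index.

A cuspidal character vanishes on the elements with two distinct eigenvalues in `F`.
* If `q ≡ 3 mod 4`, then `(q - 1)₂ = 2` and `P` has an abelian subgroup of index two, coming from a
  nonsplit torus, whose complement contains a conjugate of `diag (1, -1)`. The nonlinear
  constituents of the restriction to `P` are induced from this subgroup. The linear ones have order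
  at most two and, because the character vanishes at `diag (1, -1)`, can be paired so that the
  members of each pair differ; the sum of a pair is induced from the subgroup where its members
  agree.
* If `q ≡ 1 mod 4`, then `P` is conjugate to the group of monomial matrices with entries in the
  Sylow `2`-subgroup `⟨ζ⟩` of `Fˣ`. There the character vanishes off the conjugates of the cyclic
  subgroup `R` generated by `x = !![0, ζ; 1, 0]`, of index `(q - 1)₂`. As `R` consists of scalars
  and scalar multiples of `x`, the character is determined by its degree, its central character and
  its value at `x`. It is therefore a combination of one or two characters induced from `R`, and
  Frobenius reciprocity shows the coefficients to be nonnegative integers.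
-/

open Representation Module

section Representations

universe v

variable {k G : Type*} {V : Type v} [Field k] [Group G] [AddCommGroup V] [Module k V]

theorem nontrivial_of_isIrreducible (ρ : Representation k G V) [IsIrreducible ρ] :
    Nontrivial V := by
  by_contra hV
  rw [not_nontrivial_iff_subsingleton] at hV
  exact bot_ne_top (α := Subrepresentation ρ)
    (Subrepresentation.toSubmodule_injective (Subsingleton.elim _ _))

theorem isIrreducible_of_forall_eq_top [Nontrivial V] {ρ : Representation k G V}
    (h : ∀ W : Subrepresentation ρ, W ≠ ⊥ → W = ⊤) : IsIrreducible ρ :=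
  have : Nontrivial (Subrepresentation ρ) :=
    ⟨⊥, ⊤, fun e => bot_ne_top (α := Submodule k V) (congrArg Subrepresentation.toSubmodule e)⟩
  ⟨fun W => or_iff_not_imp_left.2 (h W)⟩

theorem eq_top_of_isIrreducible (ρ : Representation k G V) [IsIrreducible ρ] {W : Submodule k V}
    (hW : W ≠ ⊥) (h : ∀ g, ∀ w ∈ W, ρ g w ∈ W) : W = ⊤ :=
  let W' : Subrepresentation ρ := ⟨W, fun g _ => h g _⟩
  congrArg Subrepresentation.toSubmodule <| (eq_bot_or_eq_top W').resolve_left fun e =>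
    hW (congrArg Subrepresentation.toSubmodule e)

theorem isCompl_toSubmodule {ρ : Representation k G V} {W W' : Subrepresentation ρ}
    (h : IsCompl W W') : IsCompl W.toSubmodule W'.toSubmodule := by
  rw [isCompl_iff, disjoint_iff, codisjoint_iff, ← Subrepresentation.toSubmodule_inf,
    ← Subrepresentation.toSubmodule_sup, h.inf_eq_bot, h.sup_eq_top]
  exact ⟨rfl, rfl⟩

theorem character_eq_add_of_isCompl [FiniteDimensional k V] {ρ : Representation k G V}
    {W W' : Subrepresentation ρ} (h : IsCompl W W') :
    ρ.character = W.toRepresentation.character + W'.toRepresentation.character := by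
  ext g
  let e := Submodule.prodEquivOfIsCompl _ _ (isCompl_toSubmodule h)
  have hconj : ρ g = e.conj ((W.toRepresentation g).prodMap (W'.toRepresentation g)) := by
    ext v
    obtain ⟨⟨w, w'⟩, rfl⟩ := e.surjective v
    simp [e, LinearEquiv.conj_apply_apply, Subrepresentation.toRepresentation]
  simp only [Pi.add_apply, Representation.character, hconj, LinearMap.trace_conj',
    LinearMap.trace_prodMap']

theorem character_induction [Finite G] [NeZero (Nat.card G : k)] {p : (G → k) → Prop}
    (zero : p 0) (add : ∀ f g, p f → p g → p (f + g))
    (irreducible : ∀ {V : Type v} [AddCommGroup V] [Module k V] [FiniteDimensional k V]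
      (ρ : Representation k G V) [IsIrreducible ρ], p ρ.character)
    [FiniteDimensional k V] (ρ : Representation k G V) : p ρ.character := by
  induction hn : finrank k V using Nat.strong_induction_on generalizing V with
  | _ n ih =>
    rcases subsingleton_or_nontrivial V with hV | hV
    · have hzero : ρ.character = 0 := by
        ext g
        simp [Representation.character, Subsingleton.elim (ρ g) 0]
      rwa [hzero]
    by_cases hρ : IsIrreducible ρ
    · exact irreducible ρ
    obtain ⟨W, hW, hW'⟩ : ∃ W : Subrepresentation ρ, W ≠ ⊥ ∧ W ≠ ⊤ := by
      contrapose! hρ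
      exact isIrreducible_of_forall_eq_top hρ
    obtain ⟨W', hc⟩ := exists_isCompl W
    have hlt : finrank k W.toSubmodule < finrank k V :=
      Submodule.finrank_lt fun e => hW' (Subrepresentation.toSubmodule_injective e)
    have hpos : finrank k W.toSubmodule ≠ 0 := fun e =>
      hW (Subrepresentation.toSubmodule_injective (Submodule.finrank_eq_zero.1 e))
    have hsum := Submodule.finrank_add_eq_of_isCompl (isCompl_toSubmodule hc)
    rw [character_eq_add_of_isCompl hc]
    exact add _ _ (ih _ (by omega) W.toRepresentation rfl)
      (ih _ (by omega) W'.toRepresentation rfl)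

theorem isIrreducible_of_simple {k G : Type} [Field k] [Group G] (V : FDRep k G)
    [CategoryTheory.Simple V] : IsIrreducible (V.ρ : Representation k G V) := by
  have : Nontrivial V := by
    by_contra hV
    rw [not_nontrivial_iff_subsingleton] at hV
    refine CategoryTheory.id_nonzero V ?_
    ext v
    exact Subsingleton.elim (α := V) _ _
  refine isIrreducible_of_forall_eq_top fun W hW => ?_
  let ι : FDRep.of W.toRepresentation ⟶ V :=
    ⟨FGModuleCat.ofHom W.toSubmodule.subtype, fun _ => rfl⟩
  have : CategoryTheory.Mono ι :=
    CategoryTheory.ConcreteCategory.mono_of_injective ι Subtype.val_injective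
  have hι : ι ≠ 0 := by
    rintro h0
    refine hW (Subrepresentation.toSubmodule_injective ((Submodule.eq_bot_iff _).2 fun w hw => ?_))
    exact congrArg (fun f => f.hom.hom.hom (⟨w, hw⟩ : W.toSubmodule)) h0
  have := CategoryTheory.isIso_of_mono_of_nonzero hι
  refine Subrepresentation.toSubmodule_injective (Submodule.eq_top_iff'.2 fun v => ?_)
  obtain ⟨w, rfl⟩ := (CategoryTheory.ConcreteCategory.bijective_of_isIso ι).2 v
  exact (w : W.toSubmodule).2

theorem simple_of_isIrreducible {k G V : Type} [Field k] [IsAlgClosed k] [CharZero k] [Group G]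
    [Finite G] [AddCommGroup V] [Module k V] [FiniteDimensional k V] (ρ : Representation k G V)
    [IsIrreducible ρ] : CategoryTheory.Simple (FDRep.of ρ) := by
  have := Fintype.ofFinite G
  have hcard : (Nat.card G : k) ≠ 0 := Nat.cast_ne_zero.2 Nat.card_pos.ne'
  have := invertibleOfNonzero hcard
  rw [FDRep.simple_iff_char_is_norm_one]
  have h := Representation.char_orthonormal ρ ρ
  rwa [if_pos ⟨.refl ρ⟩, inv_mul_eq_one₀ hcard, eq_comm] at h

theorem exists_common_eigenvector [IsAlgClosed k] [FiniteDimensional k V] [Nontrivial V]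
    {ι : Type*} (f : ι → End k V) (hf : ∀ i j, f i * f j = f j * f i) :
    ∃ v ≠ 0, ∀ i, ∃ c : k, f i v = c • v := by
  let A := Algebra.adjoin k (Set.range f)
  have : IsMulCommutative A := Algebra.isMulCommutative_adjoin k (by
    rintro _ ⟨i, rfl⟩ _ ⟨j, rfl⟩
    exact hf i j)
  have : IsArtinian A V := isArtinian_of_tower k inferInstance
  obtain ⟨N, hN⟩ := IsAtomic.exists_atom (Submodule A V)
  have := isSimpleModule_iff_isAtom.2 hN
  have : FiniteDimensional k N := inferInstanceAs (FiniteDimensional k (N.restrictScalars k))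
  have hrank : finrank k (N.restrictScalars k) = 1 :=
    IsSimpleModule.finrank_eq_one_of_isMulCommutative A N k
  obtain ⟨v, hv0, hv⟩ := finrank_eq_one_iff'.1 hrank
  refine ⟨v, fun h => hv0 (Subtype.ext h), fun i => ?_⟩
  obtain ⟨c, hc⟩ := hv ⟨f i v, N.smul_mem ⟨f i, Algebra.subset_adjoin ⟨i, rfl⟩⟩ v.2⟩
  exact ⟨c, (congrArg Subtype.val hc).symm⟩

theorem exists_common_eigenvector_mem [IsAlgClosed k] [FiniteDimensional k V] {ι : Type*}
    (f : ι → End k V) (hf : ∀ i j, f i * f j = f j * f i) {W : Submodule k V} (hW : W ≠ ⊥)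
    (hinv : ∀ i, ∀ w ∈ W, f i w ∈ W) : ∃ v ∈ W, v ≠ 0 ∧ ∀ i, ∃ c : k, f i v = c • v := by
  have := Submodule.nontrivial_iff_ne_bot.2 hW
  obtain ⟨w, hw, h⟩ := exists_common_eigenvector (fun i => (f i).restrict (hinv i)) fun i j => by
    ext w
    exact LinearMap.congr_fun (hf i j) w
  exact ⟨w, w.2, fun h0 => hw (Subtype.ext h0),
    fun i => (h i).imp fun _ hc => congrArg Subtype.val hc⟩

theorem exists_eigenvector_mem [IsAlgClosed k] [FiniteDimensional k V] (ρ : Representation k G V)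
    (C : Subgroup G) [IsMulCommutative C] {W : Submodule k V} (hW : W ≠ ⊥)
    (hinv : ∀ c ∈ C, ∀ w ∈ W, ρ c w ∈ W) :
    ∃ v ∈ W, v ≠ 0 ∧ ∀ c ∈ C, ∃ t : k, ρ c v = t • v := by
  obtain ⟨v, hvW, hv, h⟩ := exists_common_eigenvector_mem (fun c : C => ρ c)
    (fun a b => by rw [← map_mul, ← map_mul, ← C.coe_mul, mul_comm', C.coe_mul]) hW
    fun c => hinv c c.2
  exact ⟨v, hvW, hv, fun c hc => h ⟨c, hc⟩⟩

/-- The one-dimensional representation afforded by a linear character. -/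
def linearRepresentation (θ : G →* k) : Representation k G k :=
  (Module.toModuleEnd k k).toMonoidHom.comp θ

theorem character_linearRepresentation (θ : G →* k) : (linearRepresentation θ).character = θ := by
  ext g
  have : linearRepresentation θ g = θ g • LinearMap.id := rfl
  simp [Representation.character, this]

theorem exists_monoidHom_of_eigenvector (ρ : Representation k G V) {v : V} (hv : v ≠ 0)
    (h : ∀ g, ∃ c : k, ρ g v = c • v) : ∃ θ : G →* k, ∀ g, ρ g v = θ g • v := by
  choose c hc using h
  have hinj : Function.Injective fun a : k => a • v := smul_left_injective k hv
  refine ⟨⟨⟨c, hinj ?_⟩, fun g h => hinj ?_⟩, hc⟩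
  · simp [← hc]
  · change c (g * h) • v = (c g * c h) • v
    rw [← hc, map_mul, End.mul_apply, hc h, map_smul, hc g, smul_smul, mul_comm]

theorem exists_character_eq_of_finrank_eq_one (ρ : Representation k G V) (h : finrank k V = 1) :
    ∃ θ : G →* k, ρ.character = θ := by
  obtain ⟨v, hv, hspan⟩ := finrank_eq_one_iff'.1 h
  obtain ⟨θ, hθ⟩ := exists_monoidHom_of_eigenvector ρ hv
    fun g => (hspan (ρ g v)).imp fun _ => Eq.symm
  have := Module.finite_of_finrank_eq_succ h
  refine ⟨θ, funext fun g => ?_⟩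
  have hscalar : ρ g = θ g • LinearMap.id := by
    ext w
    obtain ⟨c, rfl⟩ := hspan w
    rw [map_smul, hθ, LinearMap.smul_apply, LinearMap.id_apply, smul_comm]
  simp [Representation.character, hscalar, LinearMap.trace_id, h]

end Representations

section InducedCharacters

theorem inducedChar_zero {P : Type*} [Group P] [Fintype P] (Q : Subgroup P) :
    inducedChar Q 0 = 0 := by
  ext x
  simp [inducedChar]

theorem inducedChar_add {P : Type*} [Group P] [Fintype P] (Q : Subgroup P) (f g : Q → ℂ) :
    inducedChar Q (f + g) = inducedChar Q f + inducedChar Q g := by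
  ext x
  simp only [inducedChar, Pi.add_apply, ← mul_add, ← Finset.sum_add_distrib]
  congr! 2
  split_ifs <;> simp

theorem inducedChar_top {P : Type*} [Group P] [Fintype P] (f : P → ℂ)
    (hf : ∀ x g, f (x * g * x⁻¹) = f g) :
    inducedChar (⊤ : Subgroup P) (fun x => f x) = f := by
  ext g
  simp [inducedChar, hf]

theorem inducedChar_comap {A B : Type*} [Group A] [Fintype A] [Group B] [Fintype B] (e : A ≃* B)
    (Q : Subgroup B) (f : Q → ℂ) (a : A) :
    inducedChar (Q.comap e.toMonoidHom) (fun x => f ⟨e x, x.2⟩) a = inducedChar Q f (e a) := by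
  have hcard : Fintype.card (Q.comap e.toMonoidHom) = Fintype.card Q :=
    Fintype.card_congr (e.toEquiv.subtypeEquiv fun _ => Iff.rfl)
  simp only [inducedChar, hcard, ← Equiv.sum_comp e.toEquiv]
  congr! 3 with x
  all_goals simp [Subgroup.mem_comap]

variable {P : Type} [Group P] [Fintype P] {m : ℕ}

theorem IsIrreducibleCharacter.comp_mulEquiv {A B : Type} [Group A] [Finite A] [Group B]
    (e : A ≃* B) {χ : B → ℂ} (hχ : IsIrreducibleCharacter χ) :
    IsIrreducibleCharacter (χ ∘ e) := by
  have := Fintype.ofFinite A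
  have := Fintype.ofEquiv A e.toEquiv
  obtain ⟨V, hV, rfl⟩ := hχ
  refine ⟨FDRep.of ((V.ρ : Representation ℂ B V).comp e.toMonoidHom), ?_, rfl⟩
  rw [FDRep.simple_iff_char_is_norm_one] at hV ⊢
  rw [Nat.card_congr e.toEquiv, ← hV, ← Equiv.sum_comp e.toEquiv]
  refine Finset.sum_congr rfl fun a _ => ?_
  rw [MulEquiv.toEquiv_eq_coe, EquivLike.coe_coe, ← map_inv]
  rfl

variable (P m) in
/-- The sums of characters of `P` induced from irreducible characters of subgroups of index `m`,
as an additive submonoid of the functions on `P`. -/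
def inducedSums : AddSubmonoid (P → ℂ) :=
  AddSubmonoid.closure {f | ∃ (Q : Subgroup P) (φ : Q → ℂ),
    IsIrreducibleCharacter φ ∧ Q.index = m ∧ f = inducedChar Q φ}

theorem sumInducedProperty_of_mem_inducedSums {p d : ℕ} {G : Type} [Group G] [Fintype G]
    {P : Subgroup G} {χ : G → ℂ}
    (h : (fun x : P => χ x) ∈ inducedSums P (p ^ d.factorization p)) :
    SumInducedProperty p P χ d := by
  obtain ⟨l, hl, hsum⟩ := AddSubmonoid.exists_list_of_mem_closure h
  choose Q φ hφ hQ hf using fun i : Fin l.length => hl _ (l.get_mem i)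
  refine ⟨l.length, Q, φ, hφ, fun i => (hQ i).symm, fun x => ?_⟩
  rw [← congrFun hsum x, ← Fin.sum_univ_getElem, Finset.sum_apply]
  exact Finset.sum_congr rfl fun i _ => congrFun (hf i) x

theorem inducedChar_character_mem_inducedSums (Q : Subgroup P) {V : Type} [AddCommGroup V]
    [Module ℂ V] [FiniteDimensional ℂ V] (ρ : Representation ℂ Q V) :
    inducedChar Q ρ.character ∈ inducedSums P Q.index := by
  refine character_induction (p := fun f => inducedChar Q f ∈ inducedSums P Q.index) ?_ ?_ ?_ ρ
  · simpa only [inducedChar_zero] using zero_mem _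
  · intro f g hf hg
    simpa only [inducedChar_add] using add_mem hf hg
  · intro V _ _ _ ρ _
    exact AddSubmonoid.subset_closure
      ⟨Q, ρ.character, ⟨_, simple_of_isIrreducible ρ, rfl⟩, rfl, rfl⟩

theorem inducedChar_monoidHom_mem_inducedSums (Q : Subgroup P) (θ : Q →* ℂ) :
    inducedChar Q θ ∈ inducedSums P Q.index := by
  rw [← character_linearRepresentation]
  exact inducedChar_character_mem_inducedSums Q _

theorem character_mem_inducedSums_one {V : Type} [AddCommGroup V] [Module ℂ V]
    [FiniteDimensional ℂ V] (ρ : Representation ℂ P V) : ρ.character ∈ inducedSums P 1 := by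
  rw [← inducedChar_top ρ.character fun x g => ρ.char_conj g x, ← Subgroup.index_top (G := P)]
  exact inducedChar_character_mem_inducedSums ⊤ (ρ.comp (⊤ : Subgroup P).subtype)

theorem comp_mulEquiv_mem_inducedSums {A B : Type} [Group A] [Fintype A] [Group B] [Fintype B]
    (e : A ≃* B) {f : B → ℂ} (hf : f ∈ inducedSums B m) : f ∘ e ∈ inducedSums A m := by
  induction hf using AddSubmonoid.closure_induction with
  | mem f hf =>
    obtain ⟨Q, φ, hφ, rfl, rfl⟩ := hf
    let e' : Q.comap e.toMonoidHom ≃* Q :=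
      ⟨e.toEquiv.subtypeEquiv fun _ => Iff.rfl, fun x y => Subtype.ext (map_mul e x.1 y.1)⟩
    exact AddSubmonoid.subset_closure ⟨Q.comap e.toMonoidHom, φ ∘ e', hφ.comp_mulEquiv e',
      Q.index_comap_of_surjective e.surjective, funext fun a => (inducedChar_comap e Q φ a).symm⟩
  | zero => exact zero_mem _
  | add f g _ _ hf hg => exact add_mem hf hg

end InducedCharacters

section MonomialCharacters

/-- Multipliers `c g i` for which `g · eᵢ = c g i • e_{g • i}` defines a representation on the
free module with basis `(eᵢ)`: a monomial representation over the `G`-set `I`. -/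
structure MonomialCocycle (k G I : Type*) [Field k] [Group G] [MulAction G I] where
  toFun : G → I → k
  map_one' : ∀ i, toFun 1 i = 1
  map_mul' : ∀ g h i, toFun (g * h) i = toFun g (h • i) * toFun h i

namespace MonomialCocycle

variable {k G I : Type*} [Field k] [Group G] [MulAction G I]

instance : CoeFun (MonomialCocycle k G I) fun _ => G → I → k := ⟨toFun⟩

theorem map_one (c : MonomialCocycle k G I) (i : I) : c 1 i = 1 := c.map_one' i

theorem map_mul (c : MonomialCocycle k G I) (g h : G) (i : I) :
    c (g * h) i = c g (h • i) * c h i := c.map_mul' g h i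

theorem map_conj (c : MonomialCocycle k G I) {g : G} {i : I} (hi : g • i = i) (x : G) :
    c (x * g * x⁻¹) (x • i) = c g i := by
  have hinv : c x i * c x⁻¹ (x • i) = 1 := by
    rw [← c.map_one (x • i), ← mul_inv_cancel x, c.map_mul, inv_smul_smul]
  rw [c.map_mul, c.map_mul, inv_smul_smul, hi]
  linear_combination c g i * hinv

/-- The character of the monomial representation: the sum of the multipliers of the fixed points. -/
noncomputable def character [Fintype I] (c : MonomialCocycle k G I) (g : G) : k :=
  ∑ i, if g • i = i then c g i else 0

/-- The monomial representation on the functions on `I`. -/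
def toRepresentation (c : MonomialCocycle k G I) : Representation k G (I → k) where
  toFun g :=
    { toFun := fun f i => c g (g⁻¹ • i) * f (g⁻¹ • i)
      map_add' := fun f f' => by ext; simp [mul_add]
      map_smul' := fun t f => by ext; simp [mul_left_comm] }
  map_one' := by ext; simp [c.map_one]
  map_mul' g h := by ext; simp [c.map_mul, mul_smul, mul_assoc]

theorem toRepresentation_single (c : MonomialCocycle k G I) (g : G) (i : I) :
    c.toRepresentation g (Pi.single i 1) = c g i • Pi.single (g • i) (1 : k) := by
  ext j
  rcases eq_or_ne j (g • i) with rfl | hj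
  · simp [toRepresentation]
  · have hj' : g⁻¹ • j ≠ i := fun h => hj (by rw [← h, smul_inv_smul])
    simp [toRepresentation, hj, hj']

theorem character_eq_of_basis {V : Type*} [AddCommGroup V] [Module k V] [Fintype I]
    (c : MonomialCocycle k G I) {ρ : Representation k G V} (b : Basis I k V)
    (h : ∀ g i, ρ g (b i) = c g i • b (g • i)) : ρ.character = c.character := by
  ext g
  rw [Representation.character, LinearMap.trace_eq_matrix_trace k b, Matrix.trace, character]
  refine Finset.sum_congr rfl fun i _ => ?_
  rw [Matrix.diag_apply, LinearMap.toMatrix_apply, h, map_smul, b.repr_self, Finsupp.smul_apply,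
    Finsupp.single_apply, smul_eq_mul, mul_ite, mul_one, mul_zero]

theorem character_toRepresentation [Fintype I] (c : MonomialCocycle k G I) :
    c.toRepresentation.character = c.character :=
  c.character_eq_of_basis (Pi.basisFun k I) fun g i => by
    simpa using c.toRepresentation_single g i

/-- Pullback of a cocycle along a group homomorphism and an equivariant map. -/
def comap {H J : Type*} [Group H] [MulAction H J] (c : MonomialCocycle k G I) (φ : H →* G)
    (f : J → I) (hf : ∀ h j, f (h • j) = φ h • f j) : MonomialCocycle k H J where
  toFun h j := c (φ h) (f j)
  map_one' j := by rw [_root_.map_one, c.map_one]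
  map_mul' g h j := by rw [_root_.map_mul, c.map_mul, hf]

/-- Restriction of a cocycle to an orbit of a subgroup. -/
def restrictOrbit (c : MonomialCocycle k G I) (K : Subgroup G) (i : I) :
    MonomialCocycle k K (MulAction.orbit K i) :=
  c.comap K.subtype Subtype.val fun _ _ => rfl

end MonomialCocycle

section Orbits

variable {G I : Type*} [Group G] [MulAction G I] {K : Subgroup G} {i₀ : I}

theorem smul_mem_orbit_subgroup_iff (hK : MulAction.stabilizer G i₀ ≤ K) (x : G) :
    x • i₀ ∈ MulAction.orbit K i₀ ↔ x ∈ K := by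
  refine ⟨?_, fun h => ⟨⟨x, h⟩, rfl⟩⟩
  rintro ⟨y, hy⟩
  have hstab : (y : G)⁻¹ * x ∈ MulAction.stabilizer G i₀ := by
    rw [MulAction.mem_stabilizer_iff, mul_smul, inv_smul_eq_iff]
    exact hy.symm
  simpa using K.mul_mem y.2 (hK hstab)

theorem mem_subgroup_of_smul_eq_of_mem_orbit (hK : MulAction.stabilizer G i₀ ≤ K) {g : G} {i : I}
    (hi : i ∈ MulAction.orbit K i₀) (hg : g • i = i) : g ∈ K := by
  obtain ⟨y, rfl⟩ := hi
  have hgy : g * y ∈ K := by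
    rw [← smul_mem_orbit_subgroup_iff hK, mul_smul]
    exact ⟨y, hg.symm⟩
  simpa using K.mul_mem hgy (K.inv_mem y.2)

theorem card_filter_smul_mem_orbit [Fintype G] [MulAction.IsPretransitive G I]
    (hK : MulAction.stabilizer G i₀ ≤ K) (i : I) :
    (Finset.univ.filter fun x : G => x • i ∈ MulAction.orbit K i₀).card = Fintype.card K := by
  obtain ⟨y, rfl⟩ := MulAction.exists_smul_eq G i₀ i
  simp_rw [smul_smul, smul_mem_orbit_subgroup_iff hK, ← Fintype.card_subtype]
  exact Fintype.card_congr ((Equiv.mulRight y).subtypeEquiv fun _ => Iff.rfl)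

end Orbits

namespace MonomialCocycle

section Transitive

variable {G I : Type*} [Group G] [MulAction G I] [Fintype I]
  {K : Subgroup G} {i₀ : I}

theorem character_restrictOrbit_eq_sum (c : MonomialCocycle ℂ G I)
    (hK : MulAction.stabilizer G i₀ ≤ K) (g : G) :
    (if h : g ∈ K then (c.restrictOrbit K i₀).character ⟨g, h⟩ else 0) =
      ∑ i, if i ∈ MulAction.orbit K i₀ ∧ g • i = i then c g i else 0 := by
  split_ifs with hg
  · simp_rw [ite_and]
    rw [← Finset.sum_filter,
      Finset.sum_subtype (p := (· ∈ MulAction.orbit K i₀)) _ (by simp)]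
    refine Finset.sum_congr rfl fun i _ => ?_
    simp only [Subtype.ext_iff]
    rfl
  · refine (Finset.sum_eq_zero fun i _ => if_neg ?_).symm
    exact fun ⟨hi, hgi⟩ => hg (mem_subgroup_of_smul_eq_of_mem_orbit hK hi hgi)

theorem sum_conj_eq_sum (c : MonomialCocycle ℂ G I) (x g : G) :
    (∑ i, if i ∈ MulAction.orbit K i₀ ∧ (x * g * x⁻¹) • i = i then c (x * g * x⁻¹) i else 0) =
      ∑ i, if x • i ∈ MulAction.orbit K i₀ ∧ g • i = i then c g i else 0 := by
  rw [← Equiv.sum_comp (MulAction.toPerm x)]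
  refine Finset.sum_congr rfl fun i _ => ?_
  simp only [MulAction.toPerm_apply, mul_smul, inv_smul_smul, smul_left_cancel_iff]
  split_ifs with hi
  · exact c.map_conj hi.2 x
  · rfl

theorem character_eq_inducedChar [Fintype G] [MulAction.IsPretransitive G I]
    (c : MonomialCocycle ℂ G I) (hK : MulAction.stabilizer G i₀ ≤ K) :
    c.character = inducedChar K (c.restrictOrbit K i₀).character := by
  ext g
  have hcount (i : I) : (∑ x : G, if x • i ∈ MulAction.orbit K i₀ ∧ g • i = i then c g i else 0) =
      Fintype.card K * if g • i = i then c g i else 0 := by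
    rw [← card_filter_smul_mem_orbit hK i, ← nsmul_eq_mul, ← Finset.sum_const, Finset.sum_filter]
    simp_rw [ite_and]
  simp_rw [inducedChar, character_restrictOrbit_eq_sum c hK, sum_conj_eq_sum]
  rw [Finset.sum_comm, Finset.sum_congr rfl fun i _ => hcount i, ← Finset.mul_sum,
    inv_mul_cancel_left₀ (Nat.cast_ne_zero.2 Fintype.card_ne_zero), character]

end Transitive

theorem character_eq_sum_orbits {k G I : Type*} [Field k] [Group G] [MulAction G I] [Fintype I]
    [Fintype (MulAction.orbitRel.Quotient G I)] (c : MonomialCocycle k G I) :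
    c.character = ∑ ω : MulAction.orbitRel.Quotient G I,
      (c.comap (MonoidHom.id G) (Subtype.val : ω.orbit → I) fun _ _ => rfl).character := by
  ext g
  rw [Finset.sum_apply, character, ← Equiv.sum_comp (MulAction.selfEquivSigmaOrbits' G I).symm,
    Fintype.sum_sigma]
  refine Finset.sum_congr rfl fun ω _ => Finset.sum_congr rfl fun i _ => ?_
  simp only [Subtype.ext_iff]
  rfl

theorem character_mem_inducedSums {P I : Type} [Group P] [Fintype P] [MulAction P I] [Fintype I]
    (c : MonomialCocycle ℂ P I) {m : ℕ}
    (h : ∀ i : I, ∃ K : Subgroup P, MulAction.stabilizer P i ≤ K ∧ K.index = m) :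
    c.character ∈ inducedSums P m := by
  rw [c.character_eq_sum_orbits]
  refine sum_mem fun ω _ => ?_
  obtain ⟨i⟩ : Nonempty ω.orbit := (MulAction.orbitRel.Quotient.nonempty_orbit ω).to_subtype
  obtain ⟨K, hK, rfl⟩ := h i
  have hstab : MulAction.stabilizer P i ≤ K := fun x hx => hK (congrArg Subtype.val hx)
  rw [character_eq_inducedChar _ hstab, ← character_toRepresentation]
  exact inducedChar_character_mem_inducedSums K _

end MonomialCocycle

theorem exists_index_eq_of_dvd_index {P : Type*} [Group P] [Finite P] {p : ℕ} [Fact p.Prime]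
    (hP : IsPGroup p P) {H : Subgroup P} {n : ℕ} (hn : p ^ n ∣ H.index) :
    ∃ K : Subgroup P, H ≤ K ∧ K.index = p ^ n := by
  have hp := Fact.out (p := p.Prime)
  obtain ⟨N, hN⟩ := IsPGroup.iff_card.1 hP
  obtain ⟨s, hs⟩ := IsPGroup.iff_card.1 (hP.to_subgroup H)
  have hle : s + n ≤ N := by
    rw [← Nat.pow_dvd_pow_iff_le_right hp.one_lt, ← hN, ← H.card_mul_index, hs, pow_add]
    exact mul_dvd_mul_left _ hn
  obtain ⟨K, hcard, hHK⟩ := Sylow.exists_subgroup_card_pow_prime_le p (m := N - n)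
    (hN ▸ pow_dvd_pow p (N.sub_le n)) H hs (by omega)
  refine ⟨K, hHK, Nat.eq_of_mul_eq_mul_left (pow_pos hp.pos (N - n)) ?_⟩
  rw [← hcard, K.card_mul_index, hcard, hN, ← pow_add, Nat.sub_add_cancel (by omega)]

theorem MonomialCocycle.character_mem_inducedSums_of_dvd {P I : Type} [Group P] [Fintype P]
    [MulAction P I] [Fintype I] {p : ℕ} [Fact p.Prime] (hP : IsPGroup p P)
    (c : MonomialCocycle ℂ P I) {n : ℕ} (h : ∀ i : I, p ^ n ∣ (MulAction.stabilizer P i).index) :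
    c.character ∈ inducedSums P (p ^ n) :=
  c.character_mem_inducedSums fun i => exists_index_eq_of_dvd_index hP (h i)

section MonomialFamilies

variable {k G I V : Type*} [Field k] [Group G] [MulAction G I] [AddCommGroup V] [Module k V]
  {ρ : Representation k G V} {w : I → V}

theorem exists_monomialCocycle (hw : ∀ i, w i ≠ 0)
    (h : ∀ g i, ∃ t : k, ρ g (w i) = t • w (g • i)) :
    ∃ c : MonomialCocycle k G I, ∀ g i, ρ g (w i) = c g i • w (g • i) := by
  choose c hc using h
  have hinj (i : I) : Function.Injective fun t : k => t • w i := smul_left_injective k (hw i)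
  refine ⟨⟨c, fun i => hinj i ?_, fun g h i => hinj (g • h • i) ?_⟩, hc⟩
  · simpa using (hc 1 i).symm
  · have hgh := hc (g * h) i
    rw [map_mul, End.mul_apply, hc h, map_smul, hc g, smul_smul, mul_smul g h i, mul_comm] at hgh
    exact hgh.symm

theorem span_range_eq_top_of_isIrreducible [IsIrreducible ρ] [Nonempty I] (hw : ∀ i, w i ≠ 0)
    (h : ∀ g i, ∃ t : k, ρ g (w i) = t • w (g • i)) : Submodule.span k (Set.range w) = ⊤ := by
  refine eq_top_of_isIrreducible ρ (fun hbot => ?_) fun g x hx => ?_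
  · obtain ⟨i⟩ := ‹Nonempty I›
    exact hw i (Submodule.span_eq_bot.1 hbot _ ⟨i, rfl⟩)
  · have hmap : Submodule.span k (Set.range w) ≤ (Submodule.span k (Set.range w)).comap (ρ g) := by
      rw [Submodule.span_le]
      rintro _ ⟨i, rfl⟩
      obtain ⟨t, ht⟩ := h g i
      rw [SetLike.mem_coe, Submodule.mem_comap, ht]
      exact Submodule.smul_mem _ t (Submodule.subset_span ⟨_, rfl⟩)
    exact hmap hx

/-- The translates of `v` along coset representatives. -/
noncomputable def cosetFamily (ρ : Representation k G V) (B : Subgroup G) (v : V) (i : G ⧸ B) : V :=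
  ρ i.out v

variable {B : Subgroup G} {v : V}

theorem cosetFamily_ne_zero (hv : v ≠ 0) (i : G ⧸ B) : cosetFamily ρ B v i ≠ 0 := fun h =>
  hv ((ρ.apply_bijective i.out).1 (h.trans (map_zero _).symm))

theorem exists_apply_cosetFamily_eq_smul (hB : ∀ b ∈ B, ∃ t : k, ρ b v = t • v) (g : G)
    (i : G ⧸ B) : ∃ t : k, ρ g (cosetFamily ρ B v i) = t • cosetFamily ρ B v (g • i) := by
  have hmem : (g • i).out⁻¹ * (g * i.out) ∈ B := by
    rw [← QuotientGroup.eq, QuotientGroup.out_eq', ← smul_eq_mul, ← MulAction.Quotient.smul_coe,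
      QuotientGroup.out_eq']
  obtain ⟨t, ht⟩ := hB _ hmem
  refine ⟨t, ?_⟩
  rw [cosetFamily, cosetFamily, ← map_smul, ← ht, ← End.mul_apply, ← End.mul_apply, ← map_mul,
    ← map_mul, mul_inv_cancel_left]

variable [IsIrreducible ρ]

theorem finrank_le_index_of_eigenvector [Finite (G ⧸ B)] (hv : v ≠ 0)
    (hB : ∀ b ∈ B, ∃ t : k, ρ b v = t • v) : finrank k V ≤ B.index := by
  have := Fintype.ofFinite (G ⧸ B)
  have hspan := span_range_eq_top_of_isIrreducible (cosetFamily_ne_zero (B := B) hv)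
    (exists_apply_cosetFamily_eq_smul hB)
  rw [Subgroup.index, Nat.card_eq_fintype_card, ← finrank_top k V, ← hspan]
  exact finrank_range_le_card _

theorem exists_character_eq_of_finrank_eq_index [Fintype (G ⧸ B)] (hv : v ≠ 0)
    (hB : ∀ b ∈ B, ∃ t : k, ρ b v = t • v) (hdim : finrank k V = B.index) :
    ∃ c : MonomialCocycle k G (G ⧸ B), ρ.character = c.character := by
  have hw := cosetFamily_ne_zero (ρ := ρ) (B := B) hv
  have hspan := span_range_eq_top_of_isIrreducible hw (exists_apply_cosetFamily_eq_smul hB)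
  obtain ⟨c, hc⟩ := exists_monomialCocycle hw (exists_apply_cosetFamily_eq_smul hB)
  rw [Subgroup.index, Nat.card_eq_fintype_card] at hdim
  have hli := linearIndependent_of_top_le_span_of_card_eq_finrank hspan.ge hdim.symm
  refine ⟨c, c.character_eq_of_basis (Basis.mk hli hspan.ge) fun g i => ?_⟩
  rw [Basis.mk_apply, Basis.mk_apply, hc]

end MonomialFamilies

end MonomialCharacters

section AbelianIndexTwo

theorem inducedChar_of_normal {P : Type*} [Group P] [Fintype P] (K : Subgroup P) [K.Normal]
    (f : P → ℂ) (hf : ∀ x g, f (x * g * x⁻¹) = f g) (g : P) :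
    inducedChar K (fun x => f x) g = if g ∈ K then K.index * f g else 0 := by
  have hcard : (Fintype.card P : ℂ) = Fintype.card K * K.index := by
    rw [← Nat.card_eq_fintype_card, ← Nat.card_eq_fintype_card, ← K.card_mul_index, Nat.cast_mul]
  have hK : (Fintype.card K : ℂ) ≠ 0 := Nat.cast_ne_zero.2 Fintype.card_ne_zero
  have hmem (x : P) : x * g * x⁻¹ ∈ K ↔ g ∈ K := by
    rw [Subgroup.Normal.mem_comm_iff ‹_›, inv_mul_cancel_left]
  simp only [inducedChar, hmem, hf]
  split_ifs
  · rw [Finset.sum_const, Finset.card_univ, nsmul_eq_mul, hcard, mul_assoc, inv_mul_cancel_left₀ hK]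
  · simp

variable {P : Type} [Group P]

theorem index_eqLocus_eq_two {a b : P →* ℂ} (hsq : ∀ g, a g ^ 2 = b g ^ 2) (hab : a ≠ b) :
    (a.eqLocus b).index = 2 := by
  obtain ⟨s, hs⟩ := DFunLike.exists_ne hab
  have hs' : a s = -b s := (sq_eq_sq_iff_eq_or_eq_neg.1 (hsq s)).resolve_left hs
  have hne (g : P) : b g ≠ 0 := ((Group.isUnit g).map b).ne_zero
  rw [Subgroup.index_eq_two_iff]
  refine ⟨s, fun g => ?_⟩
  change Xor (a (g * s) = b (g * s)) (a g = b g)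
  rw [map_mul, map_mul, hs', mul_neg, ← neg_mul, mul_left_inj' (hne s)]
  rcases sq_eq_sq_iff_eq_or_eq_neg.1 (hsq g) with h | h
  · exact .inr ⟨h, by rw [h, neg_eq_self]; exact hne g⟩
  · exact .inl ⟨by rw [h, neg_neg], by rw [h, neg_eq_self]; exact hne g⟩

theorem add_mem_inducedSums_two [Fintype P] {a b : P →* ℂ} (hsq : ∀ g, a g ^ 2 = b g ^ 2)
    (hab : a ≠ b) : (a + b : P → ℂ) ∈ inducedSums P 2 := by
  have hidx := index_eqLocus_eq_two hsq hab
  have := Subgroup.normal_of_index_eq_two hidx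
  have hmem := inducedChar_monoidHom_mem_inducedSums _ (a.comp (a.eqLocus b).subtype)
  rw [hidx] at hmem
  convert hmem using 1
  ext g
  refine Eq.trans ?_ (inducedChar_of_normal (a.eqLocus b) a (fun x g => ?_) g).symm
  · rw [hidx, Pi.add_apply]
    split_ifs with hg
    · rw [show a g = b g from hg]
      push_cast
      ring
    · rw [(sq_eq_sq_iff_eq_or_eq_neg.1 (hsq g)).resolve_left hg, neg_add_cancel]
  · rw [map_mul, map_mul, mul_right_comm, ← map_mul, mul_inv_cancel, map_one, one_mul]

/-- The sum of a family of linear characters, as a function. -/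
def linearSum (A : Multiset (P →* ℂ)) : P → ℂ :=
  (A.map fun θ : P →* ℂ => (θ : P → ℂ)).sum

theorem linearSum_zero : linearSum (0 : Multiset (P →* ℂ)) = 0 := rfl

theorem linearSum_cons (θ : P →* ℂ) (A : Multiset (P →* ℂ)) :
    linearSum (θ ::ₘ A) = θ + linearSum A := by
  rw [linearSum, Multiset.map_cons, Multiset.sum_cons, linearSum]

theorem linearSum_add (A B : Multiset (P →* ℂ)) :
    linearSum (A + B) = linearSum A + linearSum B := by
  rw [linearSum, Multiset.map_add, Multiset.sum_add, linearSum, linearSum]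

theorem linearSum_apply_of_forall_eq {A : Multiset (P →* ℂ)} {g : P} {t : ℂ}
    (h : ∀ θ ∈ A, θ g = t) : linearSum A g = A.card * t := by
  rw [linearSum, Pi.multiset_sum_apply, Multiset.map_map]
  refine (congrArg Multiset.sum (Multiset.map_congr rfl h)).trans ?_
  rw [Multiset.map_const', Multiset.sum_replicate, nsmul_eq_mul]

theorem linearSum_add_linearSum_mem_inducedSums [Fintype P] {A B : Multiset (P →* ℂ)}
    (hcard : A.card = B.card) (h : ∀ a ∈ A, ∀ b ∈ B, a ≠ b ∧ ∀ g, a g ^ 2 = b g ^ 2) :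
    linearSum A + linearSum B ∈ inducedSums P 2 := by
  induction A using Multiset.induction generalizing B with
  | empty =>
    rw [Multiset.card_eq_zero.1 hcard.symm, linearSum_zero, add_zero]
    exact zero_mem _
  | cons a A ih =>
    rw [Multiset.card_cons, eq_comm, Multiset.card_eq_succ_iff] at hcard
    obtain ⟨b, B, rfl, hcard⟩ := hcard
    rw [linearSum_cons, linearSum_cons, add_add_add_comm]
    obtain ⟨hab, hsq⟩ := h a (A.mem_cons_self a) b (B.mem_cons_self b)
    exact add_mem (add_mem_inducedSums_two hsq hab) (ih hcard.symm fun a' ha' b' hb' =>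
      h a' (Multiset.mem_cons_of_mem ha') b' (Multiset.mem_cons_of_mem hb'))

theorem MonomialCocycle.character_eq_zero_of_notMem {k G : Type*} [Field k] [Group G]
    {N : Subgroup G} [N.Normal] [Fintype (G ⧸ N)] (c : MonomialCocycle k G (G ⧸ N)) {s : G}
    (hs : s ∉ N) : c.character s = 0 := by
  refine Finset.sum_eq_zero fun i _ => if_neg fun hi => hs ?_
  obtain ⟨g, rfl⟩ := QuotientGroup.mk_surjective i
  rw [MulAction.Quotient.smul_mk, smul_eq_mul, QuotientGroup.mk_mul, mul_eq_right] at hi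
  exact (QuotientGroup.eq_one_iff s).1 hi

variable {C : Subgroup P} [IsMulCommutative C]

theorem exists_monoidHom_or_monomialCocycle_of_index_eq_two {k V : Type*} [Field k] [IsAlgClosed k]
    [Fintype (P ⧸ C)] (hC : C.index = 2) [AddCommGroup V] [Module k V] [FiniteDimensional k V]
    (ρ : Representation k P V) [IsIrreducible ρ] :
    (∃ θ : P →* k, ρ.character = θ) ∨
      ∃ c : MonomialCocycle k P (P ⧸ C), ρ.character = c.character := by
  have := nontrivial_of_isIrreducible ρ
  obtain ⟨v, -, hv, hvC⟩ := exists_eigenvector_mem ρ C (W := ⊤) top_ne_bot (by simp)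
  have hle := finrank_le_index_of_eigenvector hv hvC
  have hpos : 0 < finrank k V := finrank_pos
  obtain h | h : finrank k V = 1 ∨ finrank k V = C.index := by omega
  · exact .inl (exists_character_eq_of_finrank_eq_one ρ h)
  · exact .inr (exists_character_eq_of_finrank_eq_index hv hvC h)

variable [Fintype P]

theorem exists_character_eq_add_linearSum (hC : C.index = 2) {s : P} (hs : s ∉ C)
    (hlin : ∀ (θ : P →* ℂ) (g : P), θ g ^ 2 = 1) {V : Type} [AddCommGroup V] [Module ℂ V]
    [FiniteDimensional ℂ V] (ρ : Representation ℂ P V) :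
    ∃ f ∈ inducedSums P 2, f s = 0 ∧ ∃ A B : Multiset (P →* ℂ), (∀ θ ∈ A, θ s = 1) ∧
      (∀ θ ∈ B, θ s = -1) ∧ ρ.character = f + (linearSum A + linearSum B) := by
  refine character_induction (p := fun χ => ∃ f ∈ inducedSums P 2, f s = 0 ∧
    ∃ A B : Multiset (P →* ℂ), (∀ θ ∈ A, θ s = 1) ∧ (∀ θ ∈ B, θ s = -1) ∧
      χ = f + (linearSum A + linearSum B)) ?zero ?add ?irreducible ρ
  case zero => exact ⟨0, zero_mem _, rfl, 0, 0, by simp, by simp, by simp [linearSum_zero]⟩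
  case add =>
    rintro _ _ ⟨f, hf, hfs, A, B, hA, hB, rfl⟩ ⟨f', hf', hfs', A', B', hA', hB', rfl⟩
    refine ⟨f + f', add_mem hf hf', by simp [hfs, hfs'], A + A', B + B', ?_, ?_, ?_⟩
    · exact fun θ hθ => (Multiset.mem_add.1 hθ).elim (hA θ) (hA' θ)
    · exact fun θ hθ => (Multiset.mem_add.1 hθ).elim (hB θ) (hB' θ)
    · rw [linearSum_add, linearSum_add]
      abel
  case irreducible =>
    intro V _ _ _ σ _
    have := Subgroup.normal_of_index_eq_two hC
    rcases exists_monoidHom_or_monomialCocycle_of_index_eq_two hC σ with ⟨θ, hθ⟩ | ⟨c, hc⟩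
    · rcases sq_eq_one_iff.1 (hlin θ s) with h | h
      · exact ⟨0, zero_mem _, rfl, {θ}, 0, by simpa, by simp, by simp [hθ, linearSum]⟩
      · exact ⟨0, zero_mem _, rfl, 0, {θ}, by simp, by simpa, by simp [hθ, linearSum]⟩
    · refine ⟨c.character, ?_, c.character_eq_zero_of_notMem hs, 0, 0, by simp, by simp, ?_⟩
      · exact c.character_mem_inducedSums fun i => ⟨_, le_rfl, by
          rw [MulAction.index_stabilizer_of_transitive, ← Subgroup.index, hC]⟩
      · simp [hc, linearSum_zero]

theorem character_mem_inducedSums_two (hC : C.index = 2) {s : P} (hs : s ∉ C)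
    (hlin : ∀ (θ : P →* ℂ) (g : P), θ g ^ 2 = 1) {V : Type} [AddCommGroup V] [Module ℂ V]
    [FiniteDimensional ℂ V] (ρ : Representation ℂ P V) (hρs : ρ.character s = 0) :
    ρ.character ∈ inducedSums P 2 := by
  obtain ⟨f, hf, hfs, A, B, hA, hB, hρ⟩ := exists_character_eq_add_linearSum hC hs hlin ρ
  have hcard : A.card = B.card := by
    have h := congrFun hρ s
    rw [hρs, Pi.add_apply, Pi.add_apply, hfs, linearSum_apply_of_forall_eq hA,
      linearSum_apply_of_forall_eq hB] at h
    have h' : (A.card : ℂ) = B.card := by linear_combination -h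
    exact_mod_cast h'
  rw [hρ]
  refine add_mem hf (linearSum_add_linearSum_mem_inducedSums hcard fun a ha b hb => ⟨?_, ?_⟩)
  · rintro rfl
    have := (hA a ha).symm.trans (hB a hb)
    norm_num at this
  · exact fun g => (hlin a g).trans (hlin b g).symm

end AbelianIndexTwo

section CharacterInnerProduct

variable {P : Type*} [Group P] [Fintype P]

/-- The pairing `f ↦ |P|⁻¹ ∑ f(g) φ(g⁻¹)`, which for a character `φ` is the inner product of class
functions with `φ`. -/
noncomputable def charInner (φ : P → ℂ) : (P → ℂ) →ₗ[ℂ] ℂ :=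
  (Nat.card P : ℂ)⁻¹ • ∑ g : P, φ g⁻¹ • LinearMap.proj g

theorem charInner_apply (φ f : P → ℂ) :
    charInner φ f = (Nat.card P : ℂ)⁻¹ * ∑ g, f g * φ g⁻¹ := by
  simp [charInner, mul_comm]

theorem sum_conj_mul_eq_sum_subgroup (R : Subgroup P) (f : R → ℂ) {φ : P → ℂ}
    (hφ : ∀ x g, φ (x * g * x⁻¹) = φ g) (x : P) :
    (∑ g : P, (if h : x * g * x⁻¹ ∈ R then f ⟨x * g * x⁻¹, h⟩ else 0) * φ g⁻¹) =
      ∑ r : R, f r * φ (r : P)⁻¹ := by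
  let F (g : P) : ℂ := (if h : g ∈ R then f ⟨g, h⟩ else 0) * φ g⁻¹
  have hφ' (g : P) : φ (x * g * x⁻¹)⁻¹ = φ g⁻¹ := by rw [← hφ x g⁻¹]; group
  calc _ = ∑ g : P, F (MulAut.conj x g) := by simp only [F, MulAut.conj_apply, hφ']
    _ = ∑ g : P, F g := (MulAut.conj x).toEquiv.sum_comp F
    _ = ∑ g ∈ Finset.univ.filter (· ∈ R), F g :=
      (Finset.sum_filter_of_ne fun g _ hg => by_contra fun h => hg (by simp [F, h])).symm
    _ = ∑ r : R, F r := Finset.sum_subtype _ (by simp) F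
    _ = ∑ r : R, f r * φ (r : P)⁻¹ := by simp [F]

theorem charInner_inducedChar (R : Subgroup P) (f : R → ℂ) {φ : P → ℂ}
    (hφ : ∀ x g, φ (x * g * x⁻¹) = φ g) :
    charInner φ (inducedChar R f) = charInner (fun r : R => φ r) f := by
  rw [charInner_apply, charInner_apply]
  simp_rw [inducedChar, mul_assoc (Fintype.card R : ℂ)⁻¹, Finset.sum_mul, ← Finset.mul_sum]
  rw [Finset.sum_comm, Finset.sum_congr rfl fun x _ => sum_conj_mul_eq_sum_subgroup R f hφ x,
    Finset.sum_const, Finset.card_univ, nsmul_eq_mul, Nat.card_eq_fintype_card,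
    Nat.card_eq_fintype_card, mul_left_comm,
    inv_mul_cancel_left₀ (Nat.cast_ne_zero.2 Fintype.card_ne_zero)]
  rfl

theorem charInner_monoidHom_self (θ : P →* ℂ) : charInner θ θ = 1 := by
  have hone (g : P) : θ g * θ g⁻¹ = 1 := by rw [← map_mul, mul_inv_cancel, map_one]
  simp [charInner_apply, hone, -map_inv]

theorem charInner_monoidHom_of_ne {θ θ' : P →* ℂ} (h : θ ≠ θ') : charInner θ' θ = 0 := by
  obtain ⟨x, hx⟩ := DFunLike.exists_ne h
  have hinv : θ' x⁻¹ * θ' x = 1 := by rw [← map_mul, inv_mul_cancel, map_one]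
  have hshift : ∑ g, θ g * θ' g⁻¹ = θ x * θ' x⁻¹ * ∑ g, θ g * θ' g⁻¹ := by
    rw [Finset.mul_sum, ← Equiv.sum_comp (Equiv.mulLeft x)]
    refine Finset.sum_congr rfl fun g _ => ?_
    rw [Equiv.coe_mulLeft, mul_inv_rev, map_mul, map_mul]
    ring
  have hfactor : (θ x - θ' x) * ∑ g, θ g * θ' g⁻¹ = 0 := by
    linear_combination (-θ' x) * hshift - θ x * (∑ g, θ g * θ' g⁻¹) * hinv
  rw [charInner_apply, (mul_eq_zero.1 hfactor).resolve_left (sub_ne_zero.2 hx), mul_zero]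

theorem exists_natCast_eq_charInner {V : Type*} [AddCommGroup V] [Module ℂ V]
    [FiniteDimensional ℂ V] (ρ : Representation ℂ P V) (θ : P →* ℂ) :
    ∃ n : ℕ, charInner θ ρ.character = n := by
  have := invertibleOfNonzero (Nat.cast_ne_zero.2 Nat.card_pos.ne' : (Nat.card P : ℂ) ≠ 0)
  have h := card_inv_mul_sum_char_mul_char_eq_finrank (linearRepresentation θ) ρ
  rw [character_linearRepresentation] at h
  exact ⟨_, (charInner_apply _ _).trans h⟩

end CharacterInnerProduct

section NearlyCentral

theorem inducedChar_conj {P : Type*} [Group P] [Fintype P] (R : Subgroup P) (f : R → ℂ) (y g : P) :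
    inducedChar R f (y * g * y⁻¹) = inducedChar R f g := by
  rw [inducedChar, inducedChar, ← Equiv.sum_comp (Equiv.mulRight y) fun x =>
    if h : x * g * x⁻¹ ∈ R then f ⟨x * g * x⁻¹, h⟩ else 0]
  simp only [Equiv.coe_mulRight, mul_inv_rev, mul_assoc]

theorem inducedChar_one {P : Type*} [Group P] [Fintype P] (R : Subgroup P) (θ : R →* ℂ) :
    inducedChar R θ 1 = R.index := by
  have hcard : (Fintype.card P : ℂ) = Fintype.card R * R.index := by
    rw [← Nat.card_eq_fintype_card, ← Nat.card_eq_fintype_card, ← R.card_mul_index, Nat.cast_mul]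
  have hR : (Fintype.card R : ℂ) ≠ 0 := Nat.cast_ne_zero.2 Fintype.card_ne_zero
  have hone : θ ⟨1, R.one_mem⟩ = 1 := map_one θ
  simp [inducedChar, hone, hcard, hR]

theorem inducedChar_mul_of_mem_center {P : Type*} [Group P] [Fintype P] {R : Subgroup P}
    (θ : R →* ℂ) {z : P} (hz : z ∈ Subgroup.center P) (hzR : z ∈ R) (g : P) :
    inducedChar R θ (g * z) = inducedChar R θ g * θ ⟨z, hzR⟩ := by
  have hconj (y : P) : y * (g * z) * y⁻¹ = y * g * y⁻¹ * z := by
    rw [mul_assoc, mul_assoc g, ← Subgroup.mem_center_iff.1 hz]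
    simp only [mul_assoc]
  rw [inducedChar, inducedChar, mul_assoc, Finset.sum_mul]
  congr! 2 with y
  by_cases h : y * g * y⁻¹ ∈ R
  · have h' : y * g * y⁻¹ * z ∈ R := R.mul_mem h hzR
    simp only [hconj, h, h', dite_true, ← map_mul, MulMemClass.mk_mul_mk]
  · have h' : y * g * y⁻¹ * z ∉ R := fun h' => h ((R.mul_mem_cancel_right hzR).1 h')
    simp only [hconj, h, h', dite_false, zero_mul]

theorem inducedChar_eq_zero {P : Type*} [Group P] [Fintype P] {R : Subgroup P} (f : R → ℂ) {g : P}
    (hg : ∀ y, y * g * y⁻¹ ∉ R) : inducedChar R f g = 0 := by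
  simp [inducedChar, hg]

/-- The subgroup `R` is the union of the central subgroup `Z` and its translate by `x`, and `x z₀`
is the only conjugate of `x` in `R` other than `x` itself; here `d` conjugates `x` to `x z₀`. -/
structure NearlyCentral {P : Type*} [Group P] (R Z : Subgroup P) (x z₀ d : P) : Prop where
  le_center : Z ≤ Subgroup.center P
  le : Z ≤ R
  mem : x ∈ R
  mem_or_exists : ∀ r ∈ R, r ∈ Z ∨ ∃ z ∈ Z, r = x * z
  mem_central : z₀ ∈ Z
  conj : d * x * d⁻¹ = x * z₀
  notMem : d ∉ R
  mem_or_of_conj_mem : ∀ y, y * x * y⁻¹ ∈ R → y ∈ R ∨ d⁻¹ * y ∈ R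

variable {P : Type} [Group P] {R Z : Subgroup P} {x z₀ d : P} {ω : Z → ℂ}

variable (R ω) in
/-- The class functions supported on the conjugates of `R` and transforming under translation by the
central subgroup `Z` by `ω`. -/
def supportedClassFunctions : Submodule ℂ (P → ℂ) where
  carrier := {F | (∀ y g, F (y * g * y⁻¹) = F g) ∧ (∀ g (z : Z), F (g * z) = F g * ω z) ∧
    ∀ g, (∀ y, y * g * y⁻¹ ∉ R) → F g = 0}
  add_mem' := fun ⟨hc, hm, h0⟩ ⟨hc', hm', h0'⟩ => ⟨fun y g => by simp [hc, hc'],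
    fun g z => by simp [hm, hm', add_mul], fun g hg => by simp [h0 g hg, h0' g hg]⟩
  zero_mem' := by simp
  smul_mem' := fun t F ⟨hc, hm, h0⟩ => ⟨fun y g => by simp [hc],
    fun g z => by simp [hm, mul_assoc], fun g hg => by simp [h0 g hg]⟩

namespace NearlyCentral

theorem eq_of_apply_eq (h : NearlyCentral R Z x z₀ d) {F F' : P → ℂ}
    (hF : F ∈ supportedClassFunctions R ω) (hF' : F' ∈ supportedClassFunctions R ω)
    (hone : F 1 = F' 1) (hx : F x = F' x) : F = F' := by
  obtain ⟨hc, hm, h0⟩ := hF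
  obtain ⟨hc', hm', h0'⟩ := hF'
  ext g
  by_cases hg : ∀ y, y * g * y⁻¹ ∉ R
  · rw [h0 g hg, h0' g hg]
  · push Not at hg
    obtain ⟨y, hy⟩ := hg
    rw [← hc y, ← hc' y]
    rcases h.mem_or_exists _ hy with hz | ⟨z, hz, e⟩
    · simpa [hone] using (hm 1 ⟨_, hz⟩).trans (congrArg (· * _) hone |>.trans (hm' 1 ⟨_, hz⟩).symm)
    · rw [e, hm x ⟨z, hz⟩, hm' x ⟨z, hz⟩, hx]

theorem inducedChar_mem [Fintype P] (h : NearlyCentral R Z x z₀ d) {θ : R →* ℂ}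
    (hθ : ∀ z : Z, θ (Subgroup.inclusion h.le z) = ω z) :
    inducedChar R θ ∈ supportedClassFunctions R ω := by
  refine ⟨inducedChar_conj R θ, fun g z => ?_, fun g hg => inducedChar_eq_zero _ hg⟩
  rw [inducedChar_mul_of_mem_center θ (h.le_center z.2) (h.le z.2), ← hθ]
  rfl

theorem isMulCommutative (h : NearlyCentral R Z x z₀ d) : IsMulCommutative R := by
  have hZ {z : P} (hz : z ∈ Z) (g : P) : Commute z g :=
    (Subgroup.mem_center_iff.1 (h.le_center hz) g).symm
  refine ⟨⟨fun a b => Subtype.ext (?_ : Commute (a : P) b)⟩⟩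
  rcases h.mem_or_exists a a.2 with ha | ⟨z, hz, ha⟩
  · exact hZ ha b
  rcases h.mem_or_exists b b.2 with hb | ⟨w, hw, hb⟩
  · exact (hZ hb a).symm
  rw [ha, hb]
  exact (((Commute.refl x).mul_right (hZ hw x).symm).mul_left (hZ hz _))

theorem commute_of_mem (h : NearlyCentral R Z x z₀ d) {r : P} (hr : r ∈ R) : Commute r x := by
  have := h.isMulCommutative
  exact congrArg Subtype.val (mul_comm' (⟨r, hr⟩ : R) ⟨x, h.mem⟩)

theorem mul_self_eq_one (h : NearlyCentral R Z x z₀ d) : z₀ * z₀ = 1 := by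
  have hz : d * z₀ * d⁻¹ = z₀ := by
    rw [Subgroup.mem_center_iff.1 (h.le_center h.mem_central), mul_inv_cancel_right]
  have hconj : d * d * x * (d * d)⁻¹ = x * (z₀ * z₀) := by
    calc d * d * x * (d * d)⁻¹ = d * (d * x * d⁻¹) * d⁻¹ := by group
      _ = d * (x * z₀) * d⁻¹ := by rw [h.conj]
      _ = (d * x * d⁻¹) * (d * z₀ * d⁻¹) := by group
      _ = x * (z₀ * z₀) := by rw [h.conj, hz, mul_assoc]
  have hdd : d * d ∈ R := by
    refine (h.mem_or_of_conj_mem (d * d) ?_).resolve_right ?_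
    · exact hconj ▸ R.mul_mem h.mem (R.mul_mem (h.le h.mem_central) (h.le h.mem_central))
    · rw [inv_mul_cancel_left]
      exact h.notMem
  rwa [(h.commute_of_mem hdd).eq, mul_inv_cancel_right, left_eq_mul] at hconj

theorem dite_conj_mem_eq (h : NearlyCentral R Z x z₀ d) (θ : R →* ℂ) (y : P) :
    (if hy : y * x * y⁻¹ ∈ R then θ ⟨y * x * y⁻¹, hy⟩ else 0) =
      (if y ∈ R then θ ⟨x, h.mem⟩ else 0) +
        if d⁻¹ * y ∈ R then θ ⟨x, h.mem⟩ * θ ⟨z₀, h.le h.mem_central⟩ else 0 := by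
  by_cases hy : y ∈ R
  · have hdy : d⁻¹ * y ∉ R := fun hdy => h.notMem (by simpa using R.mul_mem hy (R.inv_mem hdy))
    have hconj : y * x * y⁻¹ = x := by rw [(h.commute_of_mem hy).eq, mul_inv_cancel_right]
    simp [hconj, hy, hdy, h.mem]
  by_cases hdy : d⁻¹ * y ∈ R
  · have hconj : y * x * y⁻¹ = x * z₀ := by
      rw [← h.conj, mul_inv_eq_iff_eq_mul]
      calc y * x = d * (d⁻¹ * y * x) := by group
        _ = d * x * d⁻¹ * y := by rw [(h.commute_of_mem hdy).eq]; group
    simp only [hconj, hy, hdy, if_true, if_false, zero_add, ← map_mul]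
    exact dif_pos (R.mul_mem h.mem (h.le h.mem_central))
  · have hyx : y * x * y⁻¹ ∉ R := fun hyx => (h.mem_or_of_conj_mem y hyx).elim hy hdy
    simp [hy, hdy, hyx]

theorem inducedChar_apply [Fintype P] (h : NearlyCentral R Z x z₀ d) (θ : R →* ℂ) :
    inducedChar R θ x = θ ⟨x, h.mem⟩ * (1 + θ ⟨z₀, h.le h.mem_central⟩) := by
  have hsum (t : ℂ) : (∑ y : P, if y ∈ R then t else 0) = Fintype.card R * t := by
    rw [← Finset.sum_filter, Finset.sum_const, ← Fintype.card_subtype, nsmul_eq_mul]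
  have hshift (t : ℂ) : (∑ y : P, if d⁻¹ * y ∈ R then t else 0) = Fintype.card R * t :=
    (Equiv.sum_comp (Equiv.mulLeft d⁻¹) fun y => if y ∈ R then t else 0).trans (hsum t)
  rw [inducedChar, Finset.sum_congr rfl fun y _ => h.dite_conj_mem_eq θ y, Finset.sum_add_distrib,
    hsum, hshift, ← mul_add, inv_mul_cancel_left₀ (Nat.cast_ne_zero.2 Fintype.card_ne_zero),
    mul_one_add]

end NearlyCentral

variable {V : Type} [AddCommGroup V] [Module ℂ V] {ρ : Representation ℂ P V}

theorem character_mem_supportedClassFunctions (hω : ∀ z : Z, ρ z = ω z • 1)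
    (hρ : ∀ g, (∀ y, y * g * y⁻¹ ∉ R) → ρ.character g = 0) :
    ρ.character ∈ supportedClassFunctions R ω :=
  ⟨fun y g => ρ.char_conj g y, fun g z => by
    simp [Representation.character, hω, mul_comm], hρ⟩

namespace NearlyCentral

theorem apply_central_eq_one_or [Nontrivial V] (h : NearlyCentral R Z x z₀ d)
    (hω : ∀ z : Z, ρ z = ω z • 1) : ω ⟨z₀, h.mem_central⟩ = 1 ∨ ω ⟨z₀, h.mem_central⟩ = -1 := by
  obtain ⟨v, hv⟩ := exists_ne (0 : V)
  refine mul_self_eq_one_iff.1 (smul_left_injective ℂ hv ?_)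
  have hsq : ρ z₀ (ρ z₀ v) = v := by
    rw [← End.mul_apply, ← map_mul, h.mul_self_eq_one, map_one, End.one_apply]
  simpa [hω ⟨z₀, h.mem_central⟩, smul_smul] using hsq

theorem character_apply_eq_zero (h : NearlyCentral R Z x z₀ d)
    (hχ : ρ.character ∈ supportedClassFunctions R ω) (hz₀ : ω ⟨z₀, h.mem_central⟩ = -1) :
    ρ.character x = 0 := by
  have hx := hχ.2.1 x ⟨z₀, h.mem_central⟩
  rw [hz₀, ← h.conj, hχ.1] at hx
  linear_combination hx / 2

variable [FiniteDimensional ℂ V] [Fintype P] {k : ℕ}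

theorem character_mem_inducedSums_of_eq_neg_one [Nontrivial V] (h : NearlyCentral R Z x z₀ d)
    (hω : ∀ z : Z, ρ z = ω z • 1) (hχ : ρ.character ∈ supportedClassFunctions R ω)
    (hdim : finrank ℂ V = k * R.index) (hz₀ : ω ⟨z₀, h.mem_central⟩ = -1) :
    ρ.character ∈ inducedSums P R.index := by
  have := h.isMulCommutative
  obtain ⟨v, -, hv, hvR⟩ := exists_eigenvector_mem ρ R (W := ⊤) top_ne_bot (by simp)
  obtain ⟨θ, hθ⟩ := exists_monoidHom_of_eigenvector (ρ.comp R.subtype) hv fun r => hvR r r.2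
  have hθω (z : Z) : θ (Subgroup.inclusion h.le z) = ω z := by
    refine smul_left_injective ℂ hv ((hθ _).symm.trans ?_)
    exact LinearMap.congr_fun (hω z) v
  have hind : ρ.character = k • inducedChar R θ := by
    refine h.eq_of_apply_eq hχ (nsmul_mem (h.inducedChar_mem hθω) k) ?_ ?_
    · rw [Pi.smul_apply, inducedChar_one, ρ.char_one, hdim, nsmul_eq_mul, Nat.cast_mul]
    · have hθz₀ : θ ⟨z₀, h.le h.mem_central⟩ = -1 := (hθω ⟨z₀, h.mem_central⟩).trans hz₀
      rw [Pi.smul_apply, h.inducedChar_apply, hθz₀, h.character_apply_eq_zero hχ hz₀]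
      simp
  rw [hind]
  exact nsmul_mem (inducedChar_monoidHom_mem_inducedSums R θ) k

theorem exists_character_eq_smul_add_smul (h : NearlyCentral R Z x z₀ d)
    (hχ : ρ.character ∈ supportedClassFunctions R ω) (hdim : finrank ℂ V = k * R.index)
    (hz₀ : ω ⟨z₀, h.mem_central⟩ = 1) {θ θ' : P →* ℂ} (hθ : ∀ z : Z, θ z = ω z)
    (hθ' : ∀ z : Z, θ' z = ω z) (hx : θ' x = -θ x) :
    ∃ a b : ℂ, ρ.character = a • inducedChar R (θ.comp R.subtype) +
      b • inducedChar R (θ'.comp R.subtype) := by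
  have hne : θ x ≠ 0 := ((Group.isUnit x).map θ).ne_zero
  have hθz₀ : θ z₀ = 1 := (hθ ⟨z₀, h.mem_central⟩).trans hz₀
  have hθ'z₀ : θ' z₀ = 1 := (hθ' ⟨z₀, h.mem_central⟩).trans hz₀
  refine ⟨(k + ρ.character x / (2 * θ x)) / 2, (k - ρ.character x / (2 * θ x)) / 2, ?_⟩
  refine h.eq_of_apply_eq hχ (add_mem (Submodule.smul_mem _ _ (h.inducedChar_mem hθ))
    (Submodule.smul_mem _ _ (h.inducedChar_mem hθ'))) ?_ ?_
  · simp only [Pi.add_apply, Pi.smul_apply, smul_eq_mul, inducedChar_one, ρ.char_one, hdim,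
      Nat.cast_mul]
    ring
  · simp only [Pi.add_apply, Pi.smul_apply, smul_eq_mul, h.inducedChar_apply,
      MonoidHom.comp_apply, Subgroup.subtype_apply, hθz₀, hθ'z₀, hx]
    field_simp
    ring

theorem character_mem_inducedSums_of_eq_one (h : NearlyCentral R Z x z₀ d)
    (hχ : ρ.character ∈ supportedClassFunctions R ω) (hdim : finrank ℂ V = k * R.index)
    (hz₀ : ω ⟨z₀, h.mem_central⟩ = 1) {θ θ' : P →* ℂ} (hθ : ∀ z : Z, θ z = ω z)
    (hθ' : ∀ z : Z, θ' z = ω z) (hx : θ' x = -θ x) : ρ.character ∈ inducedSums P R.index := by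
  obtain ⟨a, b, hab⟩ := h.exists_character_eq_smul_add_smul hχ hdim hz₀ hθ hθ' hx
  have hne : θ.comp R.subtype ≠ θ'.comp R.subtype := fun e => by
    have hθx : θ x = θ' x := DFunLike.congr_fun e ⟨x, h.mem⟩
    rw [hx, self_eq_neg] at hθx
    exact ((Group.isUnit x).map θ).ne_zero hθx
  have hinner (η η' : P →* ℂ) : charInner η (inducedChar R (η'.comp R.subtype)) =
      charInner (η.comp R.subtype) (η'.comp R.subtype) :=
    charInner_inducedChar R _ fun y g => by
      rw [map_mul, map_mul, mul_right_comm, ← map_mul, mul_inv_cancel, map_one, one_mul]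
  obtain ⟨m, hm⟩ := exists_natCast_eq_charInner ρ θ
  obtain ⟨n, hn⟩ := exists_natCast_eq_charInner ρ θ'
  rw [hab, map_add, map_smul, map_smul, hinner, hinner] at hm hn
  rw [charInner_monoidHom_self, charInner_monoidHom_of_ne hne.symm] at hm
  rw [charInner_monoidHom_self, charInner_monoidHom_of_ne hne] at hn
  simp only [smul_eq_mul, mul_one, mul_zero, add_zero, zero_add] at hm hn
  rw [hab, hm, hn, Nat.cast_smul_eq_nsmul, Nat.cast_smul_eq_nsmul]
  exact add_mem (nsmul_mem (inducedChar_monoidHom_mem_inducedSums R _) m)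
    (nsmul_mem (inducedChar_monoidHom_mem_inducedSums R _) n)

theorem character_mem_inducedSums [Nontrivial V] (h : NearlyCentral R Z x z₀ d)
    (hω : ∀ z : Z, ρ z = ω z • 1) (hρ : ∀ g, (∀ y, y * g * y⁻¹ ∉ R) → ρ.character g = 0)
    (hdim : finrank ℂ V = k * R.index)
    (hext : ω ⟨z₀, h.mem_central⟩ = 1 → ∃ θ θ' : P →* ℂ,
      (∀ z : Z, θ z = ω z) ∧ (∀ z : Z, θ' z = ω z) ∧ θ' x = -θ x) :
    ρ.character ∈ inducedSums P R.index := by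
  have hχ := character_mem_supportedClassFunctions hω hρ
  rcases h.apply_central_eq_one_or hω with hz₀ | hz₀
  · obtain ⟨θ, θ', hθ, hθ', hx⟩ := hext hz₀
    exact h.character_mem_inducedSums_of_eq_one hχ hdim hz₀ hθ hθ' hx
  · exact h.character_mem_inducedSums_of_eq_neg_one hω hχ hdim hz₀

end NearlyCentral

end NearlyCentral

section IsotypicProjections

variable {A V : Type*} [AddCommGroup A] [Fintype A] [AddCommGroup V] [Module ℂ V]

/-- The projection of `V` onto the subspace on which a finite abelian group `A`, acting through
`σ`, acts by the character `ψ`. -/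
noncomputable def isotypicProj (σ : AddChar A (End ℂ V)) (ψ : AddChar A ℂ) : End ℂ V :=
  (Fintype.card A : ℂ)⁻¹ • ∑ x, ψ (-x) • σ x

variable (σ : AddChar A (End ℂ V)) (ψ : AddChar A ℂ)

theorem apply_mul_isotypicProj (x : A) : σ x * isotypicProj σ ψ = ψ x • isotypicProj σ ψ := by
  rw [isotypicProj, mul_smul_comm, smul_comm]
  refine congrArg _ ?_
  rw [Finset.mul_sum, Finset.smul_sum,
    ← Equiv.sum_comp (Equiv.addLeft x) fun y => ψ x • ψ (-y) • σ y]
  refine Finset.sum_congr rfl fun y _ => ?_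
  rw [Equiv.coe_addLeft, mul_smul_comm, ← AddChar.map_add_eq_mul, smul_smul,
    ← AddChar.map_add_eq_mul, neg_add, add_neg_cancel_left]

theorem isotypicProj_mul_apply (x : A) : isotypicProj σ ψ * σ x = ψ x • isotypicProj σ ψ := by
  rw [← apply_mul_isotypicProj, isotypicProj, mul_smul_comm, smul_mul_assoc, Finset.mul_sum,
    Finset.sum_mul]
  refine congrArg _ (Finset.sum_congr rfl fun y _ => ?_)
  rw [mul_smul_comm, smul_mul_assoc, ← AddChar.map_add_eq_mul, ← AddChar.map_add_eq_mul, add_comm]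

variable {σ ψ} in
theorem isotypicProj_apply_of_forall {v : V} (h : ∀ x, σ x v = ψ x • v) :
    isotypicProj σ ψ v = v := by
  have hterm (x : A) : ψ (-x) • σ x v = v := by
    rw [h, smul_smul, ← AddChar.map_add_eq_mul, neg_add_cancel, AddChar.map_zero_eq_one, one_smul]
  simp only [isotypicProj, LinearMap.smul_apply, LinearMap.sum_apply, hterm, Finset.sum_const,
    Finset.card_univ]
  rw [← Nat.cast_smul_eq_nsmul ℂ, inv_smul_smul₀ (Nat.cast_ne_zero.2 Fintype.card_ne_zero)]

variable {σ ψ} in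
theorem mem_range_isotypicProj {v : V} :
    v ∈ LinearMap.range (isotypicProj σ ψ) ↔ ∀ x, σ x v = ψ x • v := by
  refine ⟨?_, fun h => ⟨v, isotypicProj_apply_of_forall h⟩⟩
  rintro ⟨w, rfl⟩ x
  exact LinearMap.congr_fun (apply_mul_isotypicProj σ ψ x) w

theorem isIdempotentElem_isotypicProj : IsIdempotentElem (isotypicProj σ ψ) :=
  LinearMap.ext fun v =>
    isotypicProj_apply_of_forall (mem_range_isotypicProj.1 ⟨v, rfl⟩)

theorem card_mul_finrank_range_isotypicProj [FiniteDimensional ℂ V] :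
    (Fintype.card A : ℂ) * finrank ℂ (LinearMap.range (isotypicProj σ ψ)) =
      ∑ x, ψ (-x) * LinearMap.trace ℂ V (σ x) := by
  have hproj := (LinearMap.isProj_range_iff_isIdempotentElem _).2
    (isIdempotentElem_isotypicProj σ ψ)
  rw [← hproj.trace, isotypicProj, map_smul, smul_eq_mul,
    mul_inv_cancel_left₀ (Nat.cast_ne_zero.2 Fintype.card_ne_zero), map_sum]
  simp only [map_smul, smul_eq_mul]

end IsotypicProjections

-- Gelfand's trick: the image of `e` is an irreducible module for the algebra spanned by the
-- operators `e * ρ g * e`, and irreducible modules of commutative algebras are one-dimensional.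
theorem finrank_range_le_one_of_commute {k G V : Type*} [Field k] [IsAlgClosed k] [Group G]
    [AddCommGroup V] [Module k V] [FiniteDimensional k V] (ρ : Representation k G V)
    [IsIrreducible ρ] {e : End k V} (he : IsIdempotentElem e)
    (hcomm : ∀ g h, Commute (e * ρ g * e) (e * ρ h * e)) :
    finrank k (LinearMap.range e) ≤ 1 := by
  by_cases hbot : LinearMap.range e = ⊥
  · rw [hbot, finrank_bot]
    exact zero_le_one
  obtain ⟨v, ⟨w, rfl⟩, hv, heig⟩ := exists_common_eigenvector_mem (fun g : G => e * ρ g * e) hcomm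
    hbot fun g w _ => ⟨_, rfl⟩
  have hev : e (e w) = e w := LinearMap.congr_fun he w
  have hspan : Submodule.span k (Set.range fun g => ρ g (e w)) = ⊤ :=
    span_range_eq_top_of_isIrreducible (ρ := ρ)
      (fun g h => hv ((ρ.apply_bijective g).injective (h.trans (map_zero _).symm)))
      fun g h => ⟨1, by simp⟩
  have hle : LinearMap.range e ≤ Submodule.span k {e w} := by
    rw [← Submodule.map_top, ← hspan, Submodule.map_span, Submodule.span_le]
    rintro _ ⟨_, ⟨g, rfl⟩, rfl⟩
    obtain ⟨t, ht⟩ := heig g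
    refine Submodule.mem_span_singleton.2 ⟨t, ht.symm.trans ?_⟩
    change e (ρ g (e (e w))) = e (ρ g (e w))
    rw [hev]
  exact (Submodule.finrank_mono hle).trans (finrank_span_singleton hv).le

section GL2

open Matrix.GeneralLinearGroup (upperRightHom)

variable {F : Type*} [Field F]

/-- The diagonal matrices in `GL₂(F)`. -/
def diagGL : Fˣ × Fˣ →* GL (Fin 2) F where
  toFun a := ⟨!![(a.1 : F), 0; 0, a.2], !![((a.1⁻¹ : Fˣ) : F), 0; 0, (a.2⁻¹ : Fˣ)],
    by simp [Matrix.one_fin_two], by simp [Matrix.one_fin_two]⟩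
  map_one' := by simp [Units.ext_iff, Matrix.one_fin_two]
  map_mul' a b := by simp [Units.ext_iff]

/-- The matrix `!![0, a; b, 0]` as an element of `GL₂(F)`. -/
def antidiagGL (a b : Fˣ) : GL (Fin 2) F :=
  ⟨!![0, (a : F); b, 0], !![0, ((b⁻¹ : Fˣ) : F); (a⁻¹ : Fˣ), 0],
    by simp [Matrix.one_fin_two], by simp [Matrix.one_fin_two]⟩

@[simp]
theorem coe_diagGL (a b : Fˣ) :
    (diagGL (a, b) : Matrix (Fin 2) (Fin 2) F) = !![(a : F), 0; 0, (b : F)] :=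
  rfl

@[simp]
theorem coe_antidiagGL (a b : Fˣ) :
    (antidiagGL a b : Matrix (Fin 2) (Fin 2) F) = !![0, (a : F); (b : F), 0] :=
  rfl

theorem diagGL_injective : Function.Injective (diagGL : Fˣ × Fˣ →* GL (Fin 2) F) := by
  intro p q h
  have h' : !![(p.1 : F), 0; 0, (p.2 : F)] = !![(q.1 : F), 0; 0, (q.2 : F)] := congrArg Units.val h
  simpa [Prod.ext_iff, Units.ext_iff] using h'

theorem diagGL_mul_diagGL (a b c d : Fˣ) :
    diagGL (a, b) * diagGL (c, d) = diagGL (a * c, b * d) :=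
  (map_mul diagGL (a, b) (c, d)).symm

theorem inv_diagGL (a b : Fˣ) : (diagGL (a, b))⁻¹ = diagGL (a⁻¹, b⁻¹) :=
  (map_inv diagGL (a, b)).symm

theorem antidiagGL_mul_antidiagGL (a b c d : Fˣ) :
    antidiagGL a b * antidiagGL c d = diagGL (a * d, b * c) := by
  simp [Units.ext_iff]

theorem diagGL_mul_antidiagGL (a b c d : Fˣ) :
    diagGL (a, b) * antidiagGL c d = antidiagGL (a * c) (b * d) := by
  simp [Units.ext_iff]

theorem antidiagGL_mul_diagGL (a b c d : Fˣ) :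
    antidiagGL a b * diagGL (c, d) = antidiagGL (a * d) (b * c) := by
  simp [Units.ext_iff]

theorem diagGL_mul_upperRightHom (a b : Fˣ) (x : F) :
    diagGL (a, b) * upperRightHom x = upperRightHom ((a / b : Fˣ) * x) * diagGL (a, b) := by
  simp [Units.ext_iff, div_eq_mul_inv, mul_right_comm]

/-- Transposition across the antidiagonal, the anti-involution of `GL₂(F)` that fixes the upper
unitriangular matrices. -/
def antitranspose (g : GL (Fin 2) F) : GL (Fin 2) F :=
  Matrix.GeneralLinearGroup.mkOfDetNeZero !![g 1 1, g 0 1; g 1 0, g 0 0] (by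
    have := g.det_ne_zero
    rwa [Matrix.det_fin_two, mul_comm, ← Matrix.det_fin_two_of] at this)

@[simp]
theorem coe_antitranspose (g : GL (Fin 2) F) :
    (antitranspose g : Matrix (Fin 2) (Fin 2) F) = !![g 1 1, g 0 1; g 1 0, g 0 0] :=
  rfl

theorem antitranspose_mul (g h : GL (Fin 2) F) :
    antitranspose (g * h) = antitranspose h * antitranspose g := by
  simp [Units.ext_iff, Matrix.mul_apply, mul_comm, add_comm]

theorem antitranspose_upperRightHom (x : F) :
    antitranspose (upperRightHom x) = upperRightHom x := by
  simp [Units.ext_iff]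

theorem antitranspose_antidiagGL (a b : Fˣ) : antitranspose (antidiagGL a b) = antidiagGL a b := by
  simp [Units.ext_iff]

theorem antitranspose_diagGL (a b : Fˣ) : antitranspose (diagGL (a, b)) = diagGL (b, a) := by
  simp [Units.ext_iff]

/-- The upper triangular matrices in `GL₂(F)`. -/
def borelGL (F : Type*) [Field F] : Subgroup (GL (Fin 2) F) where
  carrier := {g | g 1 0 = 0}
  one_mem' := by simp
  mul_mem' {g h} hg hh := by simp_all [Matrix.mul_apply]
  inv_mem' {g} hg := by simp_all [Matrix.inv_def, Matrix.adjugate_fin_two]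

theorem mem_borelGL {g : GL (Fin 2) F} :
    g ∈ borelGL F ↔ ∃ x a b, g = upperRightHom x * diagGL (a, b) := by
  refine ⟨fun hg => ?_, ?_⟩
  · have h10 : g 1 0 = 0 := hg
    have hdet := g.det_ne_zero
    rw [Matrix.det_fin_two, h10, mul_zero, sub_zero] at hdet
    refine ⟨g 0 1 / g 1 1, Units.mk0 _ (left_ne_zero_of_mul hdet),
      Units.mk0 _ (right_ne_zero_of_mul hdet), Units.ext ?_⟩
    refine (Matrix.eta_fin_two g.val).trans ?_
    simp [h10, right_ne_zero_of_mul hdet]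
  · rintro ⟨x, a, b, rfl⟩
    change (upperRightHom x * diagGL (a, b)) 1 0 = 0
    simp

theorem bruhat_decomposition (g : GL (Fin 2) F) :
    g ∈ borelGL F ∨ ∃ x a b y, g = upperRightHom x * antidiagGL a b * upperRightHom y := by
  refine or_iff_not_imp_left.2 fun hg => ?_
  have hc : g 1 0 ≠ 0 := hg
  have hb : g 0 1 - g 0 0 * g 1 1 / g 1 0 ≠ 0 := by
    intro h
    apply g.det_ne_zero
    rw [Matrix.det_fin_two]
    field_simp at h
    linear_combination -h
  refine ⟨g 0 0 / g 1 0, Units.mk0 _ hb, Units.mk0 _ hc, g 1 1 / g 1 0, Units.ext ?_⟩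
  refine (Matrix.eta_fin_two g.val).trans ?_
  ext i j
  fin_cases i <;> fin_cases j <;> simp <;> field_simp; ring

end GL2

section Whittaker

open Matrix.GeneralLinearGroup (upperRightHom)

variable {F V : Type*} [Field F] [AddCommGroup V] [Module ℂ V]
  (ρ : Representation ℂ (GL (Fin 2) F) V)

theorem character_upperRightHom_of_ne_zero {x : F} (hx : x ≠ 0) :
    ρ.character (upperRightHom x) = ρ.character (upperRightHom 1) := by
  have hconj : diagGL (Units.mk0 x hx, 1) * upperRightHom 1 * (diagGL (Units.mk0 x hx, 1))⁻¹ =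
      upperRightHom x := by
    rw [diagGL_mul_upperRightHom, mul_inv_cancel_right, div_one, Units.val_mk0, mul_one]
  rw [← hconj, char_conj]

variable [Fintype F] (ψ : AddChar F ℂ)

/-- The projection onto the space of vectors on which the upper unitriangular matrices act through
`ψ`: the unipotent invariants for `ψ = 1` and the `ψ`-Whittaker vectors for `ψ ≠ 1`. -/
noncomputable def unipotentProj : End ℂ V :=
  isotypicProj (ρ.compAddChar upperRightHom) ψ

theorem isIdempotentElem_unipotentProj : IsIdempotentElem (unipotentProj ρ ψ) :=
  isIdempotentElem_isotypicProj _ _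

variable {ρ ψ} in
theorem mem_range_unipotentProj {v : V} :
    v ∈ LinearMap.range (unipotentProj ρ ψ) ↔ ∀ x, ρ (upperRightHom x) v = ψ x • v :=
  mem_range_isotypicProj

theorem apply_mul_unipotentProj (x : F) :
    ρ (upperRightHom x) * unipotentProj ρ ψ = ψ x • unipotentProj ρ ψ :=
  apply_mul_isotypicProj (ρ.compAddChar upperRightHom) ψ x

theorem unipotentProj_mul_apply (x : F) :
    unipotentProj ρ ψ * ρ (upperRightHom x) = ψ x • unipotentProj ρ ψ :=
  isotypicProj_mul_apply (ρ.compAddChar upperRightHom) ψ x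

theorem unipotentProj_mul_upperRightHom_mul (x : F) (g : GL (Fin 2) F) :
    unipotentProj ρ ψ * ρ (upperRightHom x * g) * unipotentProj ρ ψ =
      ψ x • (unipotentProj ρ ψ * ρ g * unipotentProj ρ ψ) := by
  rw [map_mul, ← mul_assoc, unipotentProj_mul_apply, smul_mul_assoc, smul_mul_assoc]

theorem unipotentProj_mul_mul_upperRightHom (x : F) (g : GL (Fin 2) F) :
    unipotentProj ρ ψ * ρ (g * upperRightHom x) * unipotentProj ρ ψ =
      ψ x • (unipotentProj ρ ψ * ρ g * unipotentProj ρ ψ) := by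
  rw [map_mul, mul_assoc, mul_assoc, apply_mul_unipotentProj, mul_smul_comm, mul_smul_comm,
    mul_assoc]

variable {ψ} in
theorem unipotentProj_mul_diagGL_mul_eq_zero (hψ : ψ ≠ 1) {a b : Fˣ} (hab : a ≠ b) :
    unipotentProj ρ ψ * ρ (diagGL (a, b)) * unipotentProj ρ ψ = 0 := by
  obtain ⟨t, ht⟩ := AddChar.ne_one_iff.1 hψ
  have hne : ((a / b : Fˣ) : F) - 1 ≠ 0 := sub_ne_zero.2 fun h => hab (div_eq_one.1 (Units.ext h))
  obtain ⟨s, hs⟩ : ∃ s, (a / b : Fˣ) * s = t + s :=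
    ⟨t / (((a / b : Fˣ) : F) - 1), by linear_combination div_mul_cancel₀ t hne⟩
  have hsmul := unipotentProj_mul_mul_upperRightHom ρ ψ s (diagGL (a, b))
  rw [diagGL_mul_upperRightHom, hs, unipotentProj_mul_upperRightHom_mul,
    AddChar.map_add_eq_mul, mul_smul, smul_comm, ← sub_eq_zero, ← smul_sub,
    smul_eq_zero_iff_right (ψ.val_isUnit s).ne_zero] at hsmul
  refine (smul_eq_zero_iff_right (sub_ne_zero.2 ht)).1 ?_
  rwa [sub_smul, one_smul]

variable {ψ} in
theorem unipotentProj_mul_antitranspose_mul (hψ : ψ ≠ 1) (g : GL (Fin 2) F) :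
    unipotentProj ρ ψ * ρ (antitranspose g) * unipotentProj ρ ψ =
      unipotentProj ρ ψ * ρ g * unipotentProj ρ ψ := by
  rcases bruhat_decomposition g with hg | ⟨x, a, b, y, rfl⟩
  · obtain ⟨x, a, b, rfl⟩ := mem_borelGL.1 hg
    rw [antitranspose_mul, antitranspose_upperRightHom, antitranspose_diagGL,
      unipotentProj_mul_upperRightHom_mul, unipotentProj_mul_mul_upperRightHom]
    rcases eq_or_ne a b with rfl | hab
    · rfl
    · rw [unipotentProj_mul_diagGL_mul_eq_zero ρ hψ hab,
        unipotentProj_mul_diagGL_mul_eq_zero ρ hψ hab.symm]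
  · simp only [antitranspose_mul, antitranspose_upperRightHom, antitranspose_antidiagGL,
      ← mul_assoc, unipotentProj_mul_mul_upperRightHom]
    simp only [unipotentProj_mul_upperRightHom_mul, smul_comm (ψ x)]

theorem unipotentProj_sandwich_mul (g h : GL (Fin 2) F) :
    (unipotentProj ρ ψ * ρ g * unipotentProj ρ ψ) * (unipotentProj ρ ψ * ρ h * unipotentProj ρ ψ) =
      (Fintype.card F : ℂ)⁻¹ • ∑ x, ψ (-x) •
        (unipotentProj ρ ψ * ρ (g * upperRightHom x * h) * unipotentProj ρ ψ) := by
  set e := unipotentProj ρ ψ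
  calc e * ρ g * e * (e * ρ h * e) = e * ρ g * (e * e) * ρ h * e := by simp only [mul_assoc]
    _ = e * ρ g * ((Fintype.card F : ℂ)⁻¹ • ∑ x, ψ (-x) • ρ (upperRightHom x)) * ρ h * e := by
      rw [isIdempotentElem_unipotentProj ρ ψ]
      rfl
    _ = _ := by
      simp only [mul_smul_comm, smul_mul_assoc, Finset.mul_sum, Finset.sum_mul, map_mul, mul_assoc]

variable {ψ} in
theorem commute_unipotentProj_sandwich (hψ : ψ ≠ 1) (g h : GL (Fin 2) F) :
    Commute (unipotentProj ρ ψ * ρ g * unipotentProj ρ ψ)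
      (unipotentProj ρ ψ * ρ h * unipotentProj ρ ψ) := by
  rw [Commute, SemiconjBy, ← unipotentProj_mul_antitranspose_mul ρ hψ g,
    ← unipotentProj_mul_antitranspose_mul ρ hψ h, unipotentProj_sandwich_mul,
    unipotentProj_mul_antitranspose_mul ρ hψ g, unipotentProj_mul_antitranspose_mul ρ hψ h,
    unipotentProj_sandwich_mul]
  refine congrArg _ (Finset.sum_congr rfl fun x _ => congrArg _ ?_)
  rw [← unipotentProj_mul_antitranspose_mul ρ hψ (h * upperRightHom x * g), antitranspose_mul,
    antitranspose_mul, antitranspose_upperRightHom, mul_assoc (antitranspose g)]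

section FiniteDimensional

variable [FiniteDimensional ℂ V]

variable {ψ} in
theorem finrank_range_unipotentProj_le_one [IsIrreducible ρ] (hψ : ψ ≠ 1) :
    finrank ℂ (LinearMap.range (unipotentProj ρ ψ)) ≤ 1 :=
  finrank_range_le_one_of_commute ρ (isIdempotentElem_unipotentProj ρ ψ)
    (commute_unipotentProj_sandwich ρ hψ)

theorem card_mul_finrank_range_unipotentProj :
    (Fintype.card F : ℂ) * finrank ℂ (LinearMap.range (unipotentProj ρ ψ)) =
      finrank ℂ V + (∑ x, ψ x - 1) * ρ.character (upperRightHom 1) := by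
  have hterm (x : F) : ψ (-x) * ρ.character (upperRightHom x) =
      ψ (-x) * ρ.character (upperRightHom 1) +
        if x = 0 then (finrank ℂ V - ρ.character (upperRightHom 1) : ℂ) else 0 := by
    rcases eq_or_ne x 0 with rfl | hx
    · simp
    · rw [character_upperRightHom_of_ne_zero ρ hx, if_neg hx, add_zero]
  have hneg : ∑ x, ψ (-x) = ∑ x, ψ x := Equiv.sum_comp (Equiv.neg F) ψ
  calc (Fintype.card F : ℂ) * finrank ℂ (LinearMap.range (unipotentProj ρ ψ))
    _ = ∑ x, ψ (-x) * ρ.character (upperRightHom x) :=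
      card_mul_finrank_range_isotypicProj (ρ.compAddChar upperRightHom) ψ
    _ = finrank ℂ V + (∑ x, ψ x - 1) * ρ.character (upperRightHom 1) := by
      rw [Finset.sum_congr rfl fun x _ => hterm x, Finset.sum_add_distrib, ← Finset.sum_mul, hneg,
        Finset.sum_ite_eq' Finset.univ (0 : F), if_pos (Finset.mem_univ _)]
      ring

variable {ψ} in
theorem finrank_eq_add_finrank_range_unipotentProj (hψ : ψ ≠ 1) :
    finrank ℂ V = finrank ℂ (LinearMap.range (unipotentProj ρ 1)) +
      (Fintype.card F - 1) * finrank ℂ (LinearMap.range (unipotentProj ρ ψ)) := by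
  have hone := card_mul_finrank_range_unipotentProj ρ 1
  have hpsi := card_mul_finrank_range_unipotentProj ρ ψ
  rw [AddChar.sum_eq_zero_of_ne_one hψ] at hpsi
  simp only [AddChar.one_apply, Finset.sum_const, Finset.card_univ, nsmul_eq_mul, mul_one] at hone
  have hcard : (Fintype.card F : ℂ) ≠ 0 := Nat.cast_ne_zero.2 Fintype.card_ne_zero
  rw [← Nat.cast_inj (R := ℂ)]
  push_cast [Nat.cast_sub Fintype.card_pos]
  apply mul_left_cancel₀ hcard
  linear_combination -hone - (Fintype.card F - 1 : ℂ) * hpsi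

variable {ψ} in
theorem apply_upperRightHom_eq_one (hψ : ψ ≠ 1)
    (h : finrank ℂ (LinearMap.range (unipotentProj ρ ψ)) = 0) (x : F) :
    ρ (upperRightHom x) = 1 := by
  have hdim := finrank_eq_add_finrank_range_unipotentProj ρ hψ
  rw [h, mul_zero, add_zero] at hdim
  have htop := Submodule.eq_top_of_finrank_eq hdim.symm
  refine LinearMap.ext fun v => ?_
  have hv : v ∈ LinearMap.range (unipotentProj ρ 1) := htop ▸ Submodule.mem_top
  rw [mem_range_unipotentProj.1 hv, AddChar.one_apply, one_smul, Module.End.one_apply]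

end FiniteDimensional

end Whittaker

theorem pow_factorization_index_dvd_index_stabilizer {G : Type*} [Group G] [Finite G] {p : ℕ}
    [hp : Fact p.Prime] (P : Sylow p G) (B : Subgroup G) (i : G ⧸ B) :
    p ^ B.index.factorization p ∣ (MulAction.stabilizer (P : Subgroup G) i).index := by
  have hindex : B.index ∣ (MulAction.stabilizer (P : Subgroup G) i).index * P.index := by
    calc B.index = (MulAction.stabilizer G i).index :=
          (MulAction.index_stabilizer_of_transitive G i).symm
      _ ∣ (MulAction.stabilizer G i ⊓ P).index := Subgroup.index_dvd_of_le inf_le_left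
      _ = (MulAction.stabilizer (P : Subgroup G) i).index * P.index := by
        rw [← Subgroup.relIndex_mul_index inf_le_right, Subgroup.inf_relIndex_right]
        rfl
  exact ((hp.out.coprime_iff_not_dvd.2 P.not_dvd_index).pow_left _).dvd_of_dvd_mul_right
    ((Nat.ordProj_dvd _ _).trans hindex)

section Borel

open Matrix.GeneralLinearGroup (upperRightHom)

variable {F : Type*} [Field F]

theorem upperRightHom_mul_diagGL_injective :
    Function.Injective fun p : F × Fˣ × Fˣ => upperRightHom p.1 * diagGL p.2 := by
  rintro ⟨x, a, b⟩ ⟨y, c, d⟩ h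
  have hentry (i j : Fin 2) : (upperRightHom x * diagGL (a, b)) i j =
      (upperRightHom y * diagGL (c, d)) i j := congrArg (fun g : GL (Fin 2) F => g i j) h
  obtain rfl : a = c := Units.ext (by simpa using hentry 0 0)
  obtain rfl : b = d := Units.ext (by simpa using hentry 1 1)
  obtain rfl : x = y := by simpa using hentry 0 1
  rfl

variable (F) [Fintype F]

theorem card_borelGL :
    Nat.card (borelGL F) = Fintype.card F * ((Fintype.card F - 1) * (Fintype.card F - 1)) := by
  have hbij : Function.Bijective fun p : F × Fˣ × Fˣ =>
      (⟨upperRightHom p.1 * diagGL p.2, mem_borelGL.2 ⟨_, _, _, rfl⟩⟩ : borelGL F) := by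
    refine ⟨fun p p' h => upperRightHom_mul_diagGL_injective (congrArg Subtype.val h), ?_⟩
    rintro ⟨g, hg⟩
    obtain ⟨x, a, b, rfl⟩ := mem_borelGL.1 hg
    exact ⟨(x, a, b), rfl⟩
  rw [← Nat.card_eq_of_bijective _ hbij, Nat.card_prod, Nat.card_prod, Nat.card_units,
    Nat.card_eq_fintype_card]

theorem card_GL_two : Nat.card (GL (Fin 2) F) =
    Fintype.card F * ((Fintype.card F - 1) * (Fintype.card F - 1)) * (Fintype.card F + 1) := by
  rw [Matrix.card_GL_field, Fin.prod_univ_two]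
  obtain ⟨r, hr⟩ : ∃ r, Fintype.card F = r + 1 := ⟨_, (Nat.sub_add_cancel Fintype.card_pos).symm⟩
  have hsq : (r + 1) ^ 2 - 1 = r * (r + 2) := Nat.sub_eq_of_eq_add (by ring)
  have hsq' : (r + 1) ^ 2 - (r + 1) = (r + 1) * r := Nat.sub_eq_of_eq_add (by ring)
  simp only [Fin.val_zero, Fin.val_one, hr, pow_zero, pow_one, hsq, hsq', Nat.add_sub_cancel]
  ring

theorem index_borelGL : (borelGL F).index = Fintype.card F + 1 := by
  have h := (borelGL F).index_mul_card
  rw [card_GL_two, card_borelGL, mul_comm] at h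
  refine Nat.eq_of_mul_eq_mul_left ?_ h
  rw [← card_borelGL]
  exact Nat.card_pos

end Borel

theorem exists_addChar_ne_one (A : Type*) [AddCommGroup A] [Finite A] [Nontrivial A] :
    ∃ ψ : AddChar A ℂ, ψ ≠ 1 := by
  obtain ⟨a, ha⟩ := exists_ne (0 : A)
  obtain ⟨ψ, hψ⟩ := AddChar.exists_apply_ne_zero.2 ha
  exact ⟨ψ, AddChar.ne_one_iff.2 ⟨a, hψ⟩⟩

theorem character_mem_inducedSums_of_not_dvd {G V : Type} [Group G] [AddCommGroup V] [Module ℂ V]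
    [FiniteDimensional ℂ V] (ρ : Representation ℂ G V) (P : Subgroup G) [Fintype P] {p : ℕ}
    (h : ¬ p ∣ finrank ℂ V) :
    (fun x : P => ρ.character x) ∈ inducedSums P (p ^ (finrank ℂ V).factorization p) := by
  rw [Nat.factorization_eq_zero_of_not_dvd h, pow_zero]
  exact character_mem_inducedSums_one (ρ.comp P.subtype)

section Noncuspidal

open Matrix.GeneralLinearGroup (upperRightHom)

variable {F V : Type*} [Field F] [AddCommGroup V] [Module ℂ V]
  (ρ : Representation ℂ (GL (Fin 2) F) V)

/-- The subspace of vectors fixed by the upper unitriangular matrices. -/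
def unipotentInvariants : Submodule ℂ V :=
  ⨅ x : F, LinearMap.eqLocus (ρ (upperRightHom x)) 1

/-- A representation of `GL₂(F)` is cuspidal when the upper unitriangular matrices fix no nonzero
vector. -/
def IsCuspidal : Prop :=
  unipotentInvariants ρ = ⊥

variable {ρ}

theorem mem_unipotentInvariants {v : V} :
    v ∈ unipotentInvariants ρ ↔ ∀ x, ρ (upperRightHom x) v = v := by
  simp [unipotentInvariants]

theorem range_unipotentProj_one [Fintype F] :
    LinearMap.range (unipotentProj ρ 1) = unipotentInvariants ρ := by
  ext v
  simp only [mem_range_unipotentProj, mem_unipotentInvariants, AddChar.one_apply, one_smul]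

theorem apply_diagGL_mem_unipotentInvariants (a b : Fˣ) {w : V}
    (hw : w ∈ unipotentInvariants ρ) : ρ (diagGL (a, b)) w ∈ unipotentInvariants ρ := by
  refine mem_unipotentInvariants.2 fun x => ?_
  have hconj : upperRightHom x * diagGL (a, b) =
      diagGL (a, b) * upperRightHom ((b / a : Fˣ) * x) := by
    rw [diagGL_mul_upperRightHom, ← mul_assoc, ← Units.val_mul, div_mul_div_cancel, div_self',
      Units.val_one, one_mul]
  rw [← Module.End.mul_apply, ← map_mul, hconj, map_mul, Module.End.mul_apply,
    mem_unipotentInvariants.1 hw]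

theorem apply_antidiagGL_one_neg_one (hu : ∀ x : F, ρ (upperRightHom x) = 1) :
    ρ (antidiagGL 1 (-1)) = 1 := by
  have hdecomp : (antidiagGL 1 (-1) : GL (Fin 2) F) = upperRightHom 1 *
      (antidiagGL 1 1 * upperRightHom (-1) * antidiagGL 1 1) * upperRightHom 1 := by
    simp [Units.ext_iff]
  rw [hdecomp, map_mul, map_mul, map_mul, map_mul, hu, hu, one_mul, mul_one, mul_one, ← map_mul,
    antidiagGL_mul_antidiagGL, mul_one, ← Prod.one_eq_mk, map_one, map_one]

variable [FiniteDimensional ℂ V]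

theorem exists_borelGL_eigenvector (h : ¬ IsCuspidal ρ) :
    ∃ v : V, v ≠ 0 ∧ ∀ b ∈ borelGL F, ∃ t : ℂ, ρ b v = t • v := by
  obtain ⟨v, hv, hv0, heig⟩ := exists_eigenvector_mem ρ (diagGL (F := F)).range h <| by
    rintro _ ⟨⟨a, b⟩, rfl⟩ w hw
    exact apply_diagGL_mem_unipotentInvariants a b hw
  refine ⟨v, hv0, fun b hb => ?_⟩
  obtain ⟨x, a, c, rfl⟩ := mem_borelGL.1 hb
  obtain ⟨t, ht⟩ := heig (diagGL (a, c)) ⟨_, rfl⟩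
  exact ⟨t, by rw [map_mul, Module.End.mul_apply, ht, map_smul, mem_unipotentInvariants.1 hv]⟩

theorem finrank_eq_one_of_apply_upperRightHom_eq_one [IsIrreducible ρ]
    (hu : ∀ x : F, ρ (upperRightHom x) = 1) (h : ¬ IsCuspidal ρ) :
    finrank ℂ V = 1 := by
  obtain ⟨v, hv0, hv⟩ := exists_borelGL_eigenvector h
  have heig (g : GL (Fin 2) F) (_ : g ∈ (⊤ : Subgroup (GL (Fin 2) F))) :
      ∃ t : ℂ, ρ g v = t • v := by
    rcases bruhat_decomposition g with hg | ⟨x, a, b, y, rfl⟩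
    · exact hv g hg
    · have hfactor : antidiagGL a b = diagGL (a, -b) * antidiagGL 1 (-1) := by
        rw [diagGL_mul_antidiagGL, mul_one, neg_mul_neg, mul_one]
      obtain ⟨t, ht⟩ := hv (diagGL (a, -b)) (mem_borelGL.2 ⟨0, a, -b, by simp⟩)
      refine ⟨t, ?_⟩
      rw [map_mul, map_mul, hu, hu, mul_one, one_mul, hfactor, map_mul,
        apply_antidiagGL_one_neg_one hu, mul_one, ht]
  have hle : finrank ℂ V ≤ 1 :=
    (finrank_le_index_of_eigenvector hv0 heig).trans_eq Subgroup.index_top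
  have := nontrivial_of_isIrreducible ρ
  exact le_antisymm hle finrank_pos

theorem finrank_of_not_isCuspidal [Fintype F] [IsIrreducible ρ] (h : ¬ IsCuspidal ρ) :
    finrank ℂ V = 1 ∨ finrank ℂ V = Fintype.card F ∨ finrank ℂ V = Fintype.card F + 1 := by
  obtain ⟨ψ, hψ⟩ := exists_addChar_ne_one F
  have hdim := finrank_eq_add_finrank_range_unipotentProj ρ hψ
  rcases Nat.le_one_iff_eq_zero_or_eq_one.1 (finrank_range_unipotentProj_le_one ρ hψ) with hm | hm
  · exact Or.inl (finrank_eq_one_of_apply_upperRightHom_eq_one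
      (apply_upperRightHom_eq_one ρ hψ hm) h)
  · obtain ⟨v, hv0, hv⟩ := exists_borelGL_eigenvector h
    have hle := finrank_le_index_of_eigenvector hv0 hv
    have hpos : finrank ℂ (LinearMap.range (unipotentProj ρ 1)) ≠ 0 := fun h0 =>
      h (range_unipotentProj_one.symm.trans (Submodule.finrank_eq_zero.1 h0))
    rw [index_borelGL] at hle
    rw [hm] at hdim
    omega

end Noncuspidal

theorem character_mem_inducedSums_of_not_isCuspidal {F V : Type} [Field F] [Fintype F]
    [AddCommGroup V] [Module ℂ V] [FiniteDimensional ℂ V] {ρ : Representation ℂ (GL (Fin 2) F) V}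
    [IsIrreducible ρ] (hodd : Odd (Fintype.card F)) (P : Sylow 2 (GL (Fin 2) F))
    (h : ¬ IsCuspidal ρ) :
    (fun x : P => ρ.character x) ∈ inducedSums P (2 ^ (finrank ℂ V).factorization 2) := by
  rcases finrank_of_not_isCuspidal h with hdim | hdim | hdim
  · exact character_mem_inducedSums_of_not_dvd ρ P (by simp [hdim])
  · exact character_mem_inducedSums_of_not_dvd ρ P (hdim ▸ hodd.not_two_dvd_nat)
  · obtain ⟨v, hv0, hv⟩ := exists_borelGL_eigenvector h
    rw [← index_borelGL F] at hdim
    obtain ⟨c, hc⟩ := exists_character_eq_of_finrank_eq_index hv0 hv hdim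
    have hmem := MonomialCocycle.character_mem_inducedSums_of_dvd P.isPGroup'
      (c.comap (P : Subgroup (GL (Fin 2) F)).subtype id fun _ _ => rfl)
      (pow_factorization_index_dvd_index_stabilizer P (borelGL F))
    rw [hdim, hc]
    exact hmem

theorem exists_central_character {k G V : Type*} [Field k] [IsAlgClosed k] [Group G]
    [AddCommGroup V] [Module k V] [FiniteDimensional k V] (ρ : Representation k G V)
    [IsIrreducible ρ] : ∃ ω : Subgroup.center G →* k, ∀ z : Subgroup.center G, ρ z = ω z • 1 := by
  have := nontrivial_of_isIrreducible ρ
  have hscalar (z : Subgroup.center G) : ∃ t : k, ρ z = t • 1 := by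
    obtain ⟨t, ht⟩ := Module.End.exists_eigenvalue (ρ z)
    have htop : Module.End.eigenspace (ρ z) t = ⊤ := by
      refine eq_top_of_isIrreducible ρ ht fun g w hw => ?_
      rw [Module.End.mem_eigenspace_iff] at hw ⊢
      rw [← Module.End.mul_apply, ← map_mul, ← Subgroup.mem_center_iff.1 z.2 g, map_mul,
        Module.End.mul_apply, hw, map_smul]
    exact ⟨t, LinearMap.ext fun v => Module.End.mem_eigenspace_iff.1 (htop ▸ Submodule.mem_top)⟩
  choose ω hω using hscalar
  have hinj : Function.Injective fun t : k => t • (1 : Module.End k V) :=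
    smul_left_injective k one_ne_zero
  have hone : ω 1 = 1 := hinj (by simp [← hω])
  have hmul (z w : Subgroup.center G) : ω (z * w) = ω z * ω w := hinj <| by
    change ω (z * w) • 1 = (ω z * ω w) • 1
    rw [← hω, Subgroup.coe_mul, map_mul, hω, hω, smul_mul_smul_comm, mul_one]
  exact ⟨⟨⟨ω, hone⟩, hmul⟩, hω⟩

theorem character_mem_inducedSums_of_isPGroup {G V : Type} [Group G] [Fintype G]
    [AddCommGroup V] [Module ℂ V] (ρ : Representation ℂ G V) {p m : ℕ} [Fact p.Prime]
    (P : Sylow p G) {Q : Subgroup G} (hQ : IsPGroup p Q) (hindex : ¬ p ∣ Q.index)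
    (h : (fun x : Q => ρ.character x) ∈ inducedSums Q m) :
    (fun x : P => ρ.character x) ∈ inducedSums P m := by
  obtain ⟨g, hg⟩ := MulAction.exists_smul_eq G P (hQ.toSylow hindex)
  have hconj : (fun x : (g • P : Sylow p G) => ρ.character x) ∈
      inducedSums (g • P : Sylow p G) m := by
    rw [hg]
    exact h
  have hcomp : (fun x : P => ρ.character x) =
      (fun y : (g • P : Sylow p G) => ρ.character y) ∘ P.equivSMul g :=
    funext fun x => (ρ.char_conj _ g).symm
  exact hcomp ▸ comp_mulEquiv_mem_inducedSums (P.equivSMul g) hconj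

theorem unit_ne_neg_self {F : Type*} [Field F] [NeZero (2 : F)] (u : Fˣ) : u ≠ -u := fun h =>
  mul_ne_zero two_ne_zero u.ne_zero <| by
    have h' : (u : F) = -u := congrArg Units.val h
    linear_combination h'

section Cuspidal

open Matrix.GeneralLinearGroup (upperRightHom)

variable {F V : Type*} [Field F] [AddCommGroup V] [Module ℂ V]
  {ρ : Representation ℂ (GL (Fin 2) F) V}

theorem character_upperRightHom_mul_diagGL {a b : Fˣ} (hab : a ≠ b) (x : F) :
    ρ.character (upperRightHom x * diagGL (a, b)) = ρ.character (diagGL (a, b)) := by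
  have hne : 1 - ((a / b : Fˣ) : F) ≠ 0 :=
    sub_ne_zero.2 fun h => hab (div_eq_one.1 (Units.ext h.symm))
  obtain ⟨s, hs⟩ : ∃ s, x + (a / b : Fˣ) * s = s :=
    ⟨x / (1 - (a / b : Fˣ)), by linear_combination -div_mul_cancel₀ x hne⟩
  have hconj : upperRightHom s * diagGL (a, b) * (upperRightHom s)⁻¹ =
      upperRightHom x * diagGL (a, b) := by
    rw [mul_inv_eq_iff_eq_mul, mul_assoc, diagGL_mul_upperRightHom, ← mul_assoc,
      ← AddChar.map_add_eq_mul, hs]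
  rw [← hconj, char_conj]

theorem IsCuspidal.sum_upperRightHom [Fintype F] (h : IsCuspidal ρ) :
    ∑ x : F, ρ (upperRightHom x) = 0 := by
  refine LinearMap.ext fun v => (Submodule.mem_bot ℂ).1 ?_
  rw [← show unipotentInvariants ρ = ⊥ from h]
  refine mem_unipotentInvariants.2 fun x => ?_
  rw [LinearMap.sum_apply, map_sum]
  refine (Finset.sum_congr rfl fun y _ => ?_).trans
    (Equiv.sum_comp (Equiv.addLeft x) fun y => ρ (upperRightHom y) v)
  rw [Equiv.coe_addLeft, AddChar.map_add_eq_mul, map_mul, Module.End.mul_apply]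

theorem IsCuspidal.character_diagGL [Finite F] (h : IsCuspidal ρ) {a b : Fˣ} (hab : a ≠ b) :
    ρ.character (diagGL (a, b)) = 0 := by
  have := Fintype.ofFinite F
  have hsum : (Fintype.card F : ℂ) * ρ.character (diagGL (a, b)) = 0 := by
    calc (Fintype.card F : ℂ) * ρ.character (diagGL (a, b))
      _ = ∑ x : F, ρ.character (upperRightHom x * diagGL (a, b)) := by
        simp only [character_upperRightHom_mul_diagGL hab, Finset.sum_const, Finset.card_univ,
          nsmul_eq_mul]
      _ = LinearMap.trace ℂ V ((∑ x : F, ρ (upperRightHom x)) * ρ (diagGL (a, b))) := by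
        simp only [Finset.sum_mul, map_sum, ← map_mul, Representation.character]
      _ = 0 := by rw [h.sum_upperRightHom, zero_mul, map_zero]
  exact (mul_eq_zero.1 hsum).resolve_left (Nat.cast_ne_zero.2 Fintype.card_ne_zero)

-- `antidiagGL a b` has eigenvalues `±t` with eigenvectors `(a, ±t)`.
theorem IsCuspidal.character_antidiagGL [Finite F] [NeZero (2 : F)] (h : IsCuspidal ρ)
    {a b t : Fˣ} (hab : a * b = t * t) : ρ.character (antidiagGL a b) = 0 := by
  have hab' : (a : F) * b = t * t := congrArg Units.val hab
  have hdet : (!![(a : F), a; t, -t]).det ≠ 0 := by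
    rw [Matrix.det_fin_two_of, show (a : F) * -t - a * t = -(2 * (a * t)) by ring]
    exact neg_ne_zero.2 (mul_ne_zero two_ne_zero (mul_ne_zero a.ne_zero t.ne_zero))
  set m := Matrix.GeneralLinearGroup.mkOfDetNeZero _ hdet
  have hconj : m * diagGL (t, -t) * m⁻¹ = antidiagGL a b := by
    rw [mul_inv_eq_iff_eq_mul]
    refine Units.ext ?_
    simp [m, Matrix.GeneralLinearGroup.mkOfDetNeZero, hab', mul_comm (b : F)]
  rw [← hconj, char_conj, h.character_diagGL (unit_ne_neg_self t)]

theorem IsCuspidal.finrank_eq [Fintype F] [FiniteDimensional ℂ V] [IsIrreducible ρ]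
    (h : IsCuspidal ρ) : finrank ℂ V = Fintype.card F - 1 := by
  obtain ⟨ψ, hψ⟩ := exists_addChar_ne_one F
  have := nontrivial_of_isIrreducible ρ
  have hpos : 0 < finrank ℂ V := finrank_pos
  have hdim := finrank_eq_add_finrank_range_unipotentProj ρ hψ
  rw [range_unipotentProj_one, show unipotentInvariants ρ = ⊥ from h, finrank_bot, zero_add] at hdim
  rcases Nat.le_one_iff_eq_zero_or_eq_one.1 (finrank_range_unipotentProj_le_one ρ hψ) with hm | hm
  · rw [hm, mul_zero] at hdim
    exact absurd hdim hpos.ne'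
  · rw [hdim, hm, mul_one]

end Cuspidal

section Normalizers

variable {G : Type*} [Group G] {x s g : G}

theorem isPGroup_zpowers {p n : ℕ} (h : x ^ p ^ n = 1) : IsPGroup p (Subgroup.zpowers x) := by
  rintro ⟨_, k, rfl⟩
  refine ⟨n, Subtype.ext ?_⟩
  change (x ^ k) ^ p ^ n = 1
  rw [← zpow_natCast, zpow_comm, zpow_natCast, h, one_zpow]

theorem mem_normalizer_zpowers_of_conj_eq_inv (hs : s * x * s⁻¹ = x⁻¹) :
    s ∈ Subgroup.normalizer (Subgroup.zpowers x : Set G) := by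
  rw [Subgroup.mem_normalizer_iff_map_conj_eq, MonoidHom.map_zpowers,
    ← Subgroup.zpowers_inv (g := x), ← hs]
  rfl

theorem conj_eq_or_eq_inv_of_mem_normalizer_zpowers (hx : orderOf x = 4)
    (hg : g ∈ Subgroup.normalizer (Subgroup.zpowers x : Set G)) :
    g * x * g⁻¹ = x ∨ g * x * g⁻¹ = x⁻¹ := by
  obtain ⟨n, hn⟩ := (Subgroup.mem_normalizer_iff.1 hg x).1 (Subgroup.mem_zpowers x)
  have hzpow (m : ℤ) : x ^ m = 1 ↔ 4 ∣ m := by rw [← orderOf_dvd_iff_zpow_eq_one, hx]; rfl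
  have hodd : ¬ 2 ∣ n := fun h2 => by
    have hsq : (g * x * g⁻¹) ^ (2 : ℤ) = 1 := by
      rw [← hn, ← zpow_mul]
      exact (hzpow _).2 (by omega)
    rw [conj_zpow, mul_inv_eq_one, mul_eq_left, hzpow] at hsq
    omega
  rw [← hn, ← mul_inv_eq_one, ← mul_eq_one_iff_eq_inv]
  change x ^ n * x⁻¹ = 1 ∨ x ^ n * x = 1
  rw [← zpow_sub_one, ← zpow_add_one, hzpow, hzpow]
  omega

theorem inv_ne_self_of_orderOf_eq_four (hx : orderOf x = 4) : x⁻¹ ≠ x := fun h => by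
  have hdvd := orderOf_dvd_of_pow_eq_one (pow_two x ▸ inv_eq_iff_mul_eq_one.1 h)
  rw [hx] at hdvd
  omega

theorem mem_centralizer_singleton_iff_conj : g ∈ Subgroup.centralizer {x} ↔ g * x * g⁻¹ = x := by
  rw [Subgroup.mem_centralizer_singleton_iff, mul_inv_eq_iff_eq_mul]

theorem index_centralizer_subgroupOf {H : Subgroup G} (hx : orderOf x = 4)
    (hH : H ≤ Subgroup.normalizer (Subgroup.zpowers x : Set G)) (hs : s ∈ H)
    (hsx : s * x * s⁻¹ = x⁻¹) : ((Subgroup.centralizer {x}).subgroupOf H).index = 2 := by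
  have hne := inv_ne_self_of_orderOf_eq_four hx
  refine Subgroup.index_eq_two_iff.2 ⟨⟨s, hs⟩, fun g => ?_⟩
  have hgs (g : G) : g * s * x * (g * s)⁻¹ = (g * x * g⁻¹)⁻¹ := by
    rw [conj_inv, ← hsx]
    group
  simp only [Subgroup.mem_subgroupOf, Subgroup.coe_mul, mem_centralizer_singleton_iff_conj, hgs]
  rcases conj_eq_or_eq_inv_of_mem_normalizer_zpowers hx (hH g.2) with h | h <;> simp [h, hne, Xor]

theorem centralizer_singleton_le_normalizer_zpowers (x : G) :
    Subgroup.centralizer {x} ≤ Subgroup.normalizer (Subgroup.zpowers x) := by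
  rw [Subgroup.zpowers_eq_closure, ← Subgroup.centralizer_closure]
  exact Subgroup.centralizer_le_normalizer _

theorem card_normalizer_zpowers (hx : orderOf x = 4) (hsx : s * x * s⁻¹ = x⁻¹) :
    Nat.card (Subgroup.normalizer (Subgroup.zpowers x : Set G)) =
      2 * Nat.card (Subgroup.centralizer {x}) := by
  have hle := centralizer_singleton_le_normalizer_zpowers x
  rw [← Subgroup.index_mul_card ((Subgroup.centralizer {x}).subgroupOf _),
    index_centralizer_subgroupOf hx le_rfl (mem_normalizer_zpowers_of_conj_eq_inv hsx) hsx,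
    Nat.card_congr (Subgroup.subgroupOfEquivOfLe hle).toEquiv]

theorem exists_isPGroup_of_not_dvd_index [Finite G] {p : ℕ} [Fact p.Prime] {H N : Subgroup G}
    (hH : IsPGroup p H) (hHN : H ≤ N) (hN : ¬ p ∣ N.index) :
    ∃ Q : Subgroup G, IsPGroup p Q ∧ ¬ p ∣ Q.index ∧ H ≤ Q ∧ Q ≤ N := by
  obtain ⟨S, hS⟩ := (hH.comap_subtype (K := N)).exists_le_sylow
  refine ⟨S.map N.subtype, S.2.map _, ?_, ?_, Subgroup.map_subtype_le _⟩
  · rw [Subgroup.index_map_subtype]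
    exact (Fact.out : p.Prime).not_dvd_mul S.not_dvd_index hN
  · exact fun h hh => ⟨⟨h, hHN hh⟩, hS hh, rfl⟩

theorem map_sq_eq_map_conj_mul {M : Type*} [CommMonoid M] (θ : G →* M) (s c : G) :
    θ c ^ 2 = θ (s * c * s⁻¹ * c) := by
  have hs : θ s * θ s⁻¹ = 1 := by rw [← map_mul, mul_inv_cancel, map_one]
  rw [map_mul, map_mul, map_mul, mul_right_comm (θ s), hs, one_mul, pow_two]

end Normalizers

section NonsplitTorus

variable {F : Type*} [Field F] {a b : Fˣ} {g : GL (Fin 2) F}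

theorem mem_centralizer_antidiagGL : g ∈ Subgroup.centralizer {antidiagGL a b} ↔
    ∃ x y : F, (g : Matrix (Fin 2) (Fin 2) F) = !![x, a * y; b * y, x] := by
  rw [Subgroup.mem_centralizer_singleton_iff]
  refine ⟨fun h => ⟨g 0 0, (b⁻¹ : Fˣ) * g 1 0, ?_⟩, ?_⟩
  · have h00 : g 0 1 * b = a * g 1 0 := by
      simpa [Matrix.mul_apply] using congrArg (fun m : GL (Fin 2) F => m 0 0) h
    have h10 : g 1 1 * b = b * g 0 0 := by
      simpa [Matrix.mul_apply] using congrArg (fun m : GL (Fin 2) F => m 1 0) h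
    have h01 : g 0 1 = a * ((b⁻¹ : Fˣ) * g 1 0) := by
      rw [mul_left_comm, ← h00, mul_comm (g 0 1), Units.inv_mul_cancel_left]
    have h11 : g 1 1 = g 0 0 := by rwa [mul_comm, b.isUnit.mul_right_inj] at h10
    rw [← h01, Units.mul_inv_cancel_left]
    exact (Matrix.eta_fin_two g.val).trans (by rw [h11])
  · rintro ⟨x, y, hg⟩
    refine Units.ext ?_
    simp [hg, mul_comm, mul_left_comm]

instance isMulCommutative_centralizer_antidiagGL (a b : Fˣ) :
    IsMulCommutative (Subgroup.centralizer {antidiagGL a b}) := by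
  refine isMulCommutative_iff.2 fun g h => Subtype.ext (Units.ext ?_)
  obtain ⟨x, y, hg⟩ := mem_centralizer_antidiagGL.1 g.2
  obtain ⟨z, w, hh⟩ := mem_centralizer_antidiagGL.1 h.2
  simp only [Subgroup.coe_mul, Units.val_mul, hg, hh, Matrix.mul_fin_two]
  congr! 3 <;> ring_nf

theorem diagGL_conj_mul_of_mem_centralizer_antidiagGL
    (hg : g ∈ Subgroup.centralizer {antidiagGL a b}) :
    diagGL (1, -1) * g * (diagGL (1, -1))⁻¹ * g = diagGL (g.det, g.det) := by
  obtain ⟨x, y, hg⟩ := mem_centralizer_antidiagGL.1 hg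
  refine Units.ext ?_
  simp only [inv_diagGL, Units.val_mul, coe_diagGL, hg, Matrix.mul_fin_two, inv_one, inv_neg,
    Units.val_neg, Units.val_one, Matrix.GeneralLinearGroup.val_det_apply, Matrix.det_fin_two_of]
  congr! 3 <;> ring_nf

theorem det_ne_zero_of_not_isSquare {a b x y : F} (hab : ¬ IsSquare (a * b)) (hxy : (x, y) ≠ 0) :
    (!![x, a * y; b * y, x]).det ≠ 0 := by
  rw [Matrix.det_fin_two_of]
  intro h
  by_cases hy : y = 0
  · subst hy
    exact hxy (by simpa using h)
  · refine hab ⟨x / y, ?_⟩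
    field_simp
    linear_combination -h

theorem card_centralizer_antidiagGL [Fintype F] (hab : ¬ IsSquare (a * b : F)) :
    Nat.card (Subgroup.centralizer {antidiagGL a b}) = Fintype.card F ^ 2 - 1 := by
  let f (p : {p : F × F // p ≠ 0}) : Subgroup.centralizer {antidiagGL a b} :=
    ⟨.mkOfDetNeZero _ (det_ne_zero_of_not_isSquare hab p.2),
      mem_centralizer_antidiagGL.2 ⟨_, _, rfl⟩⟩
  have hf : f.Bijective := by
    refine ⟨fun p p' h => Subtype.ext ?_, fun g => ?_⟩
    · have h00 : p.1.1 = p'.1.1 := congrArg (fun m => m.1 0 0) h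
      have h10 : b * p.1.2 = b * p'.1.2 := congrArg (fun m => m.1 1 0) h
      exact Prod.ext h00 (b.isUnit.mul_right_inj.1 h10)
    · obtain ⟨x, y, hg⟩ := mem_centralizer_antidiagGL.1 g.2
      refine ⟨⟨(x, y), ?_⟩, Subtype.ext (Units.ext hg.symm)⟩
      rintro ⟨rfl, rfl⟩
      refine g.1.det_ne_zero ?_
      simp [hg]
  rw [← Nat.card_eq_of_bijective f hf, Nat.card_eq_fintype_card, Fintype.card_subtype_compl]
  simp [pow_two]

end NonsplitTorus

section CardModFourEqThree

variable {F : Type*} [Field F]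

/-- The matrix `!![0, -1; 1, 0]`. It has order 4, and generates a nonsplit torus of `GL₂(F)` as an
algebra when `-1` is not a square. -/
def quarterTurnGL (F : Type*) [Field F] : GL (Fin 2) F :=
  antidiagGL (-1) 1

theorem diagGL_conj_quarterTurnGL :
    diagGL (1, -1) * quarterTurnGL F * (diagGL (1, -1))⁻¹ = (quarterTurnGL F)⁻¹ := by
  rw [quarterTurnGL, eq_inv_iff_mul_eq_one, inv_diagGL, diagGL_mul_antidiagGL,
    antidiagGL_mul_diagGL, antidiagGL_mul_antidiagGL]
  simp only [mul_one, inv_one, inv_neg, mul_neg, neg_neg]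
  exact map_one diagGL

theorem quarterTurnGL_sq : quarterTurnGL F ^ 2 = diagGL (-1, -1) := by
  rw [pow_two, quarterTurnGL, antidiagGL_mul_antidiagGL, mul_one, one_mul]

theorem orderOf_quarterTurnGL [NeZero (2 : F)] : orderOf (quarterTurnGL F) = 4 := by
  refine orderOf_eq_prime_pow (p := 2) (n := 1) ?_ ?_
  · rw [pow_one, quarterTurnGL_sq, map_eq_one_iff diagGL diagGL_injective]
    exact fun h => unit_ne_neg_self (1 : Fˣ) (congrArg Prod.fst h).symm
  · rw [show 2 ^ (1 + 1) = 2 * 2 from rfl, pow_mul, quarterTurnGL_sq, ← map_pow, Prod.pow_mk,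
      neg_one_sq]
    exact map_one diagGL

theorem diagGL_notMem_centralizer_quarterTurnGL [NeZero (2 : F)] :
    diagGL (1, -1) ∉ Subgroup.centralizer {quarterTurnGL F} := by
  rw [mem_centralizer_singleton_iff_conj, diagGL_conj_quarterTurnGL]
  exact inv_ne_self_of_orderOf_eq_four orderOf_quarterTurnGL

variable [Fintype F]

theorem neZero_two_of_odd_card (hodd : Odd (Fintype.card F)) : NeZero (2 : F) :=
  ⟨Ring.two_ne_zero fun h => Nat.not_even_iff_odd.2 hodd
    (Nat.even_iff.2 (FiniteField.even_card_of_char_two h))⟩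

theorem eq_one_or_eq_neg_one_of_pow_two_pow (hq : Fintype.card F % 4 = 3) {u : Fˣ} {n : ℕ}
    (hu : u ^ 2 ^ n = 1) : u = 1 ∨ u = -1 := by
  obtain ⟨k, hk⟩ : ∃ k, Fintype.card F - 1 = 2 * (2 * k + 1) := ⟨Fintype.card F / 4, by omega⟩
  have hcop : Nat.gcd (2 ^ n) (2 * k + 1) = 1 := Nat.Coprime.pow_left n (by simp)
  have hsq : u ^ 2 = 1 := by
    rw [← pow_one (u ^ 2), ← hcop, pow_gcd_eq_one, pow_right_comm, hu, one_pow, ← pow_mul, ← hk,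
      ← Fintype.card_units, pow_card_eq_one]
    exact ⟨rfl, rfl⟩
  rw [Units.ext_iff, Units.val_pow_eq_pow_val, Units.val_one, sq_eq_one_iff] at hsq
  exact hsq.imp Units.ext Units.ext

theorem not_two_dvd_index_normalizer_quarterTurnGL (hq : Fintype.card F % 4 = 3) :
    ¬ 2 ∣ (Subgroup.normalizer
      (Subgroup.zpowers (quarterTurnGL F) : Set (GL (Fin 2) F))).index := by
  have := neZero_two_of_odd_card (F := F) (Nat.odd_iff.2 (by omega))
  have hsq : ¬ IsSquare (((-1 : Fˣ) : F) * (1 : Fˣ)) := by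
    simpa using mt FiniteField.isSquare_neg_one_iff.1 (not_not.2 hq)
  set N := Subgroup.normalizer (Subgroup.zpowers (quarterTurnGL F) : Set (GL (Fin 2) F))
  have hmul := N.index_mul_card
  rw [card_normalizer_zpowers orderOf_quarterTurnGL diagGL_conj_quarterTurnGL, quarterTurnGL,
    card_centralizer_antidiagGL hsq, card_GL_two] at hmul
  obtain ⟨k, hk⟩ : ∃ k, Fintype.card F = 4 * k + 3 := ⟨Fintype.card F / 4, by omega⟩
  have hindex : N.index = 2 * (4 * k * k + 5 * k + 1) + 1 := by
    have hcard : (4 * k + 3) ^ 2 - 1 = (4 * k + 2) * (4 * k + 4) :=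
      Nat.sub_eq_of_eq_add (by ring)
    rw [hk, hcard] at hmul
    refine Nat.eq_of_mul_eq_mul_right (by positivity) (hmul.trans ?_)
    rw [show 4 * k + 3 - 1 = 4 * k + 2 from rfl]
    ring
  omega

-- Conjugation by `diagGL (1, -1)` is the Frobenius of the torus, so `c` maps to `det c * c⁻¹`,
-- and the scalar `det c = ±1` is a commutator, `-1` being that of `diagGL (1, -1)` and
-- `quarterTurnGL F`.
theorem map_sq_eq_one_of_mem_centralizer_quarterTurnGL (hq : Fintype.card F % 4 = 3)
    {Q : Subgroup (GL (Fin 2) F)} (hQ : IsPGroup 2 Q) (hs : diagGL (1, -1) ∈ Q)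
    (hj : quarterTurnGL F ∈ Q) {M : Type*} [CommMonoid M] (θ : Q →* M) {c : Q}
    (hc : (c : GL (Fin 2) F) ∈ Subgroup.centralizer {quarterTurnGL F}) : θ c ^ 2 = 1 := by
  set s : Q := ⟨_, hs⟩
  set j : Q := ⟨_, hj⟩
  have hθj : θ (j ^ 2) = 1 := by
    have hjs : s * j * s⁻¹ * j = 1 :=
      Subtype.ext (mul_eq_one_iff_eq_inv.2 diagGL_conj_quarterTurnGL)
    rw [map_pow, map_sq_eq_map_conj_mul θ s j, hjs, map_one]
  have hdet : ((s * c * s⁻¹ * c : Q) : GL (Fin 2) F) = diagGL (c.1.det, c.1.det) :=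
    diagGL_conj_mul_of_mem_centralizer_antidiagGL hc
  obtain ⟨n, hn⟩ := hQ c
  have hdetpow : c.1.det ^ 2 ^ n = 1 := by
    rw [← map_pow, ← Subgroup.coe_pow, hn, Subgroup.coe_one, map_one]
  rw [map_sq_eq_map_conj_mul θ s c]
  rcases eq_one_or_eq_neg_one_of_pow_two_pow hq hdetpow with h | h <;> rw [h] at hdet
  · rw [show s * c * s⁻¹ * c = 1 from Subtype.ext (hdet.trans (map_one diagGL)), map_one]
  · rw [show s * c * s⁻¹ * c = j ^ 2 from Subtype.ext (hdet.trans quarterTurnGL_sq.symm), hθj]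

theorem map_sq_eq_one_of_le_normalizer_quarterTurnGL (hq : Fintype.card F % 4 = 3)
    {Q : Subgroup (GL (Fin 2) F)} (hQ : IsPGroup 2 Q)
    (hle : Q ≤ Subgroup.normalizer (Subgroup.zpowers (quarterTurnGL F)))
    (hs : diagGL (1, -1) ∈ Q) (hj : quarterTurnGL F ∈ Q) {M : Type*} [CommMonoid M] (θ : Q →* M)
    (g : Q) : θ g ^ 2 = 1 := by
  have := neZero_two_of_odd_card (F := F) (Nat.odd_iff.2 (by omega))
  have hindex := index_centralizer_subgroupOf orderOf_quarterTurnGL hle hs diagGL_conj_quarterTurnGL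
  set s : Q := ⟨_, hs⟩
  have hθs : θ s ^ 2 = 1 := by
    have hs2 : s ^ 2 = 1 := Subtype.ext <| by
      rw [Subgroup.coe_pow, ← map_pow, Prod.pow_mk, one_pow, neg_one_sq]
      exact map_one diagGL
    rw [← map_pow, hs2, map_one]
  by_cases hg : (g : GL (Fin 2) F) ∈ Subgroup.centralizer {quarterTurnGL F}
  · exact map_sq_eq_one_of_mem_centralizer_quarterTurnGL hq hQ hs hj θ hg
  · have hgs : g * s ∈ (Subgroup.centralizer {quarterTurnGL F}).subgroupOf Q :=
      (Subgroup.mul_mem_iff_of_index_two hindex).2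
        (iff_of_false hg diagGL_notMem_centralizer_quarterTurnGL)
    have hθgs := map_sq_eq_one_of_mem_centralizer_quarterTurnGL hq hQ hs hj θ (c := g * s) hgs
    rwa [map_mul, mul_pow, hθs, mul_one] at hθgs

theorem exists_isPGroup_le_normalizer_quarterTurnGL (hq : Fintype.card F % 4 = 3) :
    ∃ Q : Subgroup (GL (Fin 2) F), IsPGroup 2 Q ∧ ¬ 2 ∣ Q.index ∧ diagGL (1, -1) ∈ Q ∧
      quarterTurnGL F ∈ Q ∧ Q ≤ Subgroup.normalizer (Subgroup.zpowers (quarterTurnGL F)) := by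
  have := neZero_two_of_odd_card (F := F) (Nat.odd_iff.2 (by omega))
  set s : GL (Fin 2) F := diagGL (1, -1)
  set j := quarterTurnGL F
  have hsN : Subgroup.zpowers s ≤ Subgroup.normalizer (Subgroup.zpowers j) :=
    Subgroup.zpowers_le.2 (mem_normalizer_zpowers_of_conj_eq_inv diagGL_conj_quarterTurnGL)
  have hs : IsPGroup 2 (Subgroup.zpowers s) := isPGroup_zpowers (n := 1) <| by
    rw [pow_one, ← map_pow, Prod.pow_mk, one_pow, neg_one_sq]
    exact map_one diagGL
  have hj : IsPGroup 2 (Subgroup.zpowers j) :=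
    isPGroup_zpowers (n := 2) (orderOf_dvd_iff_pow_eq_one.1 orderOf_quarterTurnGL.dvd)
  obtain ⟨Q, hQ, hindex, hle, hQN⟩ := exists_isPGroup_of_not_dvd_index
    (hs.to_sup_of_normal_right' hj hsN) (sup_le hsN Subgroup.le_normalizer)
    (not_two_dvd_index_normalizer_quarterTurnGL hq)
  exact ⟨Q, hQ, hindex, hle (Subgroup.mem_sup_left (Subgroup.mem_zpowers s)),
    hle (Subgroup.mem_sup_right (Subgroup.mem_zpowers j)), hQN⟩

end CardModFourEqThree

theorem IsCuspidal.character_mem_inducedSums_of_mod_four_eq_three {F V : Type} [Field F]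
    [Fintype F] [AddCommGroup V] [Module ℂ V] [FiniteDimensional ℂ V]
    {ρ : Representation ℂ (GL (Fin 2) F) V} [IsIrreducible ρ] (hρ : IsCuspidal ρ)
    (hq : Fintype.card F % 4 = 3) (P : Sylow 2 (GL (Fin 2) F)) :
    (fun x : P => ρ.character x) ∈ inducedSums P (2 ^ (finrank ℂ V).factorization 2) := by
  have := neZero_two_of_odd_card (F := F) (Nat.odd_iff.2 (by omega))
  have hdim : (finrank ℂ V).factorization 2 = 1 := by
    obtain ⟨k, hk⟩ : ∃ k, Fintype.card F - 1 = 2 * (2 * k + 1) := ⟨Fintype.card F / 4, by omega⟩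
    rw [hρ.finrank_eq, hk, Nat.factorization_mul two_ne_zero (by omega), Finsupp.add_apply,
      Nat.prime_two.factorization_self, Nat.factorization_eq_zero_of_not_dvd (by omega)]
  rw [hdim, pow_one]
  obtain ⟨Q, hQ, hindex, hs, hj, hQN⟩ := exists_isPGroup_le_normalizer_quarterTurnGL hq
  have hcomm : IsMulCommutative (Subgroup.centralizer {quarterTurnGL F}) :=
    isMulCommutative_centralizer_antidiagGL _ _
  refine character_mem_inducedSums_of_isPGroup ρ P hQ hindex ?_
  exact character_mem_inducedSums_two (s := ⟨_, hs⟩)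
    (index_centralizer_subgroupOf orderOf_quarterTurnGL hQN hs diagGL_conj_quarterTurnGL)
    diagGL_notMem_centralizer_quarterTurnGL
    (map_sq_eq_one_of_le_normalizer_quarterTurnGL hq hQ hQN hs hj) (ρ.comp Q.subtype)
    (hρ.character_diagGL (unit_ne_neg_self 1))

section ZPowers

variable {A : Type*} [Group A] {x : A}

theorem mem_zpowers_iff_exists_sq {g : A} :
    g ∈ Subgroup.zpowers x ↔ ∃ z ∈ Subgroup.zpowers (x ^ 2), g = z ∨ g = x * z := by
  constructor
  · rintro ⟨n, rfl⟩
    obtain ⟨m, rfl | rfl⟩ := Int.even_or_odd' n <;> refine ⟨(x ^ 2) ^ m, ⟨m, rfl⟩, ?_⟩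
    · exact Or.inl (by simp [zpow_mul])
    · exact Or.inr (by simp [add_comm _ (1 : ℤ), zpow_add, zpow_mul])
  · rintro ⟨_, ⟨m, rfl⟩, rfl | rfl⟩
    · exact zpow_mem (pow_mem (Subgroup.mem_zpowers x) 2) m
    · exact mul_mem (Subgroup.mem_zpowers x) (zpow_mem (pow_mem (Subgroup.mem_zpowers x) 2) m)

theorem orderOf_eq_two_mul_orderOf_sq (h : Even (orderOf (x ^ 2))) :
    orderOf x = 2 * orderOf (x ^ 2) := by
  have hdvd : 2 ∣ orderOf x := h.two_dvd.trans (orderOf_pow_dvd 2)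
  rw [orderOf_pow' x two_ne_zero, Nat.gcd_eq_right hdvd, Nat.mul_div_cancel' hdvd]

theorem exists_monoidHom_zpowers {M : Type*} [Monoid M] [Finite A] {t : M}
    (ht : t ^ orderOf x = 1) :
    ∃ α : Subgroup.zpowers x →* M, α ⟨x, Subgroup.mem_zpowers x⟩ = t := by
  set g : Subgroup.zpowers x := ⟨x, Subgroup.mem_zpowers x⟩
  set u : Mˣ := Units.ofPowEqOne t _ ht (orderOf_pos x).ne'
  have hg (y : Subgroup.zpowers x) : y ∈ Subgroup.zpowers g := by
    obtain ⟨_, n, rfl⟩ := y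
    exact ⟨n, Subtype.ext (Subgroup.coe_zpow _ g n)⟩
  have hu : orderOf u ∣ orderOf g := by
    rw [Subgroup.orderOf_mk]
    exact orderOf_dvd_of_pow_eq_one (Units.pow_ofPowEqOne ht _)
  refine ⟨(Units.coeHom M).comp (monoidHomOfForallMemZpowers hg hu), ?_⟩
  rw [MonoidHom.comp_apply, monoidHomOfForallMemZpowers_apply_gen]
  rfl

end ZPowers

section Monomial

variable {F : Type*} [Field F]

theorem pow_eq_neg_one_of_orderOf_eq {ζ : Fˣ} {m : ℕ} (hm : m ≠ 0) (h : orderOf ζ = 2 * m) :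
    ζ ^ m = -1 := by
  have hζ : IsPrimitiveRoot ζ (m * 2) := by
    rw [mul_comm, ← h]
    exact IsPrimitiveRoot.orderOf ζ
  have hroot : IsPrimitiveRoot ((ζ ^ m : Fˣ) : F) 2 :=
    IsPrimitiveRoot.coe_units_iff.2 (hζ.pow (by omega) rfl)
  exact Units.ext hroot.eq_neg_one_of_two_right

theorem inv_antidiagGL (a b : Fˣ) : (antidiagGL a b)⁻¹ = antidiagGL b⁻¹ a⁻¹ := by
  rw [inv_eq_iff_mul_eq_one, antidiagGL_mul_antidiagGL, mul_inv_cancel, mul_inv_cancel]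
  exact map_one diagGL

theorem antidiagGL_inj {a b c d : Fˣ} :
    antidiagGL a b = antidiagGL c d ↔ a = c ∧ b = d := by
  simp [Units.ext_iff]

theorem diagGL_ne_antidiagGL (a b c d : Fˣ) : diagGL (a, b) ≠ antidiagGL c d := by
  simp [Units.ext_iff]

theorem det_diagGL (a b : Fˣ) : (diagGL (a, b)).det = a * b := by
  simp [Units.ext_iff]

theorem det_antidiagGL (a b : Fˣ) : (antidiagGL a b).det = -(a * b) := by
  simp [Units.ext_iff]

theorem diagGL_mem_center (u : Fˣ) : diagGL (u, u) ∈ Subgroup.center (GL (Fin 2) F) := by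
  refine Subgroup.mem_center_iff.2 fun g => Units.ext ?_
  ext i j
  fin_cases i <;> fin_cases j <;> simp [Matrix.mul_apply, mul_comm]

theorem exists_scalar_character {V : Type*} [AddCommGroup V] [Module ℂ V]
    [FiniteDimensional ℂ V] (ρ : Representation ℂ (GL (Fin 2) F) V) [IsIrreducible ρ] :
    ∃ ω : Fˣ →* ℂ, ∀ u, ρ (diagGL (u, u)) = ω u • 1 := by
  obtain ⟨ω, hω⟩ := exists_central_character ρ
  let scalar : Fˣ →* Subgroup.center (GL (Fin 2) F) :=
    (diagGL.comp ((MonoidHom.id Fˣ).prod (MonoidHom.id Fˣ))).codRestrict _ diagGL_mem_center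
  exact ⟨ω.comp scalar, fun u => hω (scalar u)⟩

/-- The monomial matrices in `GL₂(F)` with nonzero entries in `C`, that is, the wreath product of
`C` with the group of order two. -/
def monomialGL (C : Subgroup Fˣ) : Subgroup (GL (Fin 2) F) where
  carrier := {g | ∃ a ∈ C, ∃ b ∈ C, g = diagGL (a, b) ∨ g = antidiagGL a b}
  one_mem' := ⟨1, one_mem C, 1, one_mem C, Or.inl (map_one diagGL).symm⟩
  mul_mem' := by
    rintro _ _ ⟨a, ha, b, hb, rfl | rfl⟩ ⟨c, hc, d, hd, rfl | rfl⟩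
    · exact ⟨_, mul_mem ha hc, _, mul_mem hb hd, Or.inl (diagGL_mul_diagGL ..)⟩
    · exact ⟨_, mul_mem ha hc, _, mul_mem hb hd, Or.inr (diagGL_mul_antidiagGL ..)⟩
    · exact ⟨_, mul_mem ha hd, _, mul_mem hb hc, Or.inr (antidiagGL_mul_diagGL ..)⟩
    · exact ⟨_, mul_mem ha hd, _, mul_mem hb hc, Or.inl (antidiagGL_mul_antidiagGL ..)⟩
  inv_mem' := by
    rintro _ ⟨a, ha, b, hb, rfl | rfl⟩
    · exact ⟨_, inv_mem ha, _, inv_mem hb, Or.inl (inv_diagGL ..)⟩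
    · exact ⟨_, inv_mem hb, _, inv_mem ha, Or.inr (inv_antidiagGL ..)⟩

theorem diagGL_mem_monomialGL {C : Subgroup Fˣ} {a b : Fˣ} (ha : a ∈ C) (hb : b ∈ C) :
    diagGL (a, b) ∈ monomialGL C :=
  ⟨a, ha, b, hb, Or.inl rfl⟩

theorem antidiagGL_mem_monomialGL {C : Subgroup Fˣ} {a b : Fˣ} (ha : a ∈ C) (hb : b ∈ C) :
    antidiagGL a b ∈ monomialGL C :=
  ⟨a, ha, b, hb, Or.inr rfl⟩

theorem card_monomialGL [Finite F] (C : Subgroup Fˣ) :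
    Nat.card (monomialGL C) = 2 * (Nat.card C * Nat.card C) := by
  let f : (C × C) ⊕ (C × C) → monomialGL C := Sum.elim
    (fun p => ⟨diagGL (p.1, p.2), diagGL_mem_monomialGL p.1.2 p.2.2⟩)
    (fun p => ⟨antidiagGL p.1 p.2, antidiagGL_mem_monomialGL p.1.2 p.2.2⟩)
  have hinj : Function.Injective f := by
    refine Function.Injective.sumElim (fun p q h => ?_) (fun p q h => ?_) fun p q h =>
      diagGL_ne_antidiagGL _ _ _ _ (congrArg Subtype.val h)
    · have hpq := Prod.ext_iff.1 (diagGL_injective (congrArg Subtype.val h))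
      exact Prod.ext (Subtype.ext hpq.1) (Subtype.ext hpq.2)
    · have hpq := antidiagGL_inj.1 (congrArg Subtype.val h)
      exact Prod.ext (Subtype.ext hpq.1) (Subtype.ext hpq.2)
  have hsurj : Function.Surjective f := by
    rintro ⟨_, a, ha, b, hb, rfl | rfl⟩
    · exact ⟨Sum.inl (⟨a, ha⟩, ⟨b, hb⟩), rfl⟩
    · exact ⟨Sum.inr (⟨a, ha⟩, ⟨b, hb⟩), rfl⟩
  rw [← Nat.card_congr (Equiv.ofBijective f ⟨hinj, hsurj⟩), Nat.card_sum, Nat.card_prod, two_mul]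

theorem det_mem_of_mem_monomialGL {C : Subgroup Fˣ} (hneg : -1 ∈ C) {g : GL (Fin 2) F}
    (hg : g ∈ monomialGL C) : g.det ∈ C := by
  obtain ⟨a, ha, b, hb, rfl | rfl⟩ := hg
  · rw [det_diagGL]
    exact mul_mem ha hb
  · rw [det_antidiagGL, ← neg_one_mul]
    exact mul_mem hneg (mul_mem ha hb)

variable {ζ : Fˣ}

theorem antidiagGL_one_sq : antidiagGL ζ 1 ^ 2 = diagGL (ζ, ζ) := by
  rw [sq, antidiagGL_mul_antidiagGL, mul_one, one_mul]

theorem mem_zpowers_diagGL {g : GL (Fin 2) F} :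
    g ∈ Subgroup.zpowers (diagGL (ζ, ζ)) ↔ ∃ c ∈ Subgroup.zpowers ζ, g = diagGL (c, c) := by
  rw [Subgroup.exists_mem_zpowers]
  refine exists_congr fun n => ?_
  change diagGL (ζ, ζ) ^ n = g ↔ _
  rw [← map_zpow, eq_comm]
  rfl

theorem mem_zpowers_antidiagGL {g : GL (Fin 2) F} :
    g ∈ Subgroup.zpowers (antidiagGL ζ 1) ↔
      ∃ c ∈ Subgroup.zpowers ζ, g = diagGL (c, c) ∨ g = antidiagGL (ζ * c) c := by
  rw [mem_zpowers_iff_exists_sq, antidiagGL_one_sq]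
  simp only [mem_zpowers_diagGL]
  constructor
  · rintro ⟨_, ⟨c, hc, rfl⟩, h⟩
    rw [antidiagGL_mul_diagGL, one_mul] at h
    exact ⟨c, hc, h⟩
  · rintro ⟨c, hc, h⟩
    exact ⟨_, ⟨c, hc, rfl⟩, by rwa [antidiagGL_mul_diagGL, one_mul]⟩

theorem zpowers_antidiagGL_le_monomialGL :
    Subgroup.zpowers (antidiagGL ζ 1) ≤ monomialGL (Subgroup.zpowers ζ) :=
  Subgroup.zpowers_le.2 (antidiagGL_mem_monomialGL (Subgroup.mem_zpowers ζ) (one_mem _))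

theorem orderOf_antidiagGL (h : Even (orderOf ζ)) :
    orderOf (antidiagGL ζ 1) = 2 * orderOf ζ := by
  have hsq : orderOf (antidiagGL ζ 1 ^ 2) = orderOf ζ := by
    rw [antidiagGL_one_sq, orderOf_injective diagGL diagGL_injective, Prod.orderOf_mk,
      Nat.lcm_self]
  rw [← hsq] at h
  rw [orderOf_eq_two_mul_orderOf_sq h, hsq]

theorem index_zpowers_antidiagGL [Finite F] (h : Even (orderOf ζ)) :
    ((Subgroup.zpowers (antidiagGL ζ 1)).subgroupOf
      (monomialGL (Subgroup.zpowers ζ))).index = orderOf ζ := by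
  have hmul := ((Subgroup.zpowers (antidiagGL ζ 1)).subgroupOf
    (monomialGL (Subgroup.zpowers ζ))).index_mul_card
  rw [Nat.card_congr (Subgroup.subgroupOfEquivOfLe zpowers_antidiagGL_le_monomialGL).toEquiv,
    card_monomialGL, Nat.card_zpowers, Nat.card_zpowers, orderOf_antidiagGL h] at hmul
  exact Nat.eq_of_mul_eq_mul_right (mul_pos two_pos (orderOf_pos ζ)) (by linarith)

theorem eq_or_eq_neg_of_diagGL_conj_mem {a b : Fˣ}
    (h : diagGL (a, b) * antidiagGL ζ 1 * (diagGL (a, b))⁻¹ ∈ Subgroup.zpowers (antidiagGL ζ 1)) :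
    b = a ∨ b = -a := by
  rw [inv_diagGL, diagGL_mul_antidiagGL, antidiagGL_mul_diagGL, mul_one,
    mem_zpowers_antidiagGL] at h
  obtain ⟨c, -, h | h⟩ := h
  · exact absurd h.symm (diagGL_ne_antidiagGL _ _ _ _)
  · obtain ⟨h₁, h₂⟩ := antidiagGL_inj.1 h
    have hsq : b * b = a * a := by
      rw [← h₂, mul_comm a, mul_assoc, mul_right_inj, mul_inv_eq_iff_eq_mul, mul_right_comm,
        eq_mul_inv_iff_mul_eq] at h₁
      exact h₁.symm
    exact (mul_self_eq_mul_self_iff.1 (congrArg Units.val hsq)).imp Units.ext Units.ext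

theorem mem_zpowers_antidiagGL_of_diagGL_conj_mem {a b : Fˣ} (ha : a ∈ Subgroup.zpowers ζ)
    (h : diagGL (a, b) * antidiagGL ζ 1 * (diagGL (a, b))⁻¹ ∈ Subgroup.zpowers (antidiagGL ζ 1)) :
    diagGL (a, b) ∈ Subgroup.zpowers (antidiagGL ζ 1) ∨
      (diagGL (1, -1))⁻¹ * diagGL (a, b) ∈ Subgroup.zpowers (antidiagGL ζ 1) := by
  rcases eq_or_eq_neg_of_diagGL_conj_mem h with rfl | rfl
  · exact Or.inl (mem_zpowers_antidiagGL.2 ⟨b, ha, Or.inl rfl⟩)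
  · refine Or.inr (mem_zpowers_antidiagGL.2 ⟨a, ha, Or.inl ?_⟩)
    simp [inv_diagGL, diagGL_mul_diagGL]

theorem mem_zpowers_antidiagGL_of_conj_mem {y : GL (Fin 2) F}
    (hy : y ∈ monomialGL (Subgroup.zpowers ζ))
    (h : y * antidiagGL ζ 1 * y⁻¹ ∈ Subgroup.zpowers (antidiagGL ζ 1)) :
    y ∈ Subgroup.zpowers (antidiagGL ζ 1) ∨
      (diagGL (1, -1))⁻¹ * y ∈ Subgroup.zpowers (antidiagGL ζ 1) := by
  obtain ⟨a, ha, b, _, rfl | rfl⟩ := hy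
  · exact mem_zpowers_antidiagGL_of_diagGL_conj_mem ha h
  · have hx := Subgroup.mem_zpowers (antidiagGL ζ 1)
    have hfactor : antidiagGL a b = diagGL (a * ζ⁻¹, b) * antidiagGL ζ 1 := by
      rw [diagGL_mul_antidiagGL, inv_mul_cancel_right, mul_one]
    rw [hfactor, mul_inv_rev, mul_assoc _ (antidiagGL ζ 1) (antidiagGL ζ 1), ← mul_assoc,
      mul_assoc _ _ (antidiagGL ζ 1)⁻¹, mul_inv_cancel_right] at h
    rw [hfactor, ← mul_assoc, Subgroup.mul_mem_cancel_right _ hx,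
      Subgroup.mul_mem_cancel_right _ hx]
    exact mem_zpowers_antidiagGL_of_diagGL_conj_mem
      (mul_mem ha (inv_mem (Subgroup.mem_zpowers ζ))) h

theorem nearlyCentral_monomialGL [NeZero (2 : F)] (hneg : -1 ∈ Subgroup.zpowers ζ) :
    NearlyCentral
      ((Subgroup.zpowers (antidiagGL ζ 1)).subgroupOf (monomialGL (Subgroup.zpowers ζ)))
      ((Subgroup.zpowers (diagGL (ζ, ζ))).subgroupOf (monomialGL (Subgroup.zpowers ζ)))
      ⟨antidiagGL ζ 1, antidiagGL_mem_monomialGL (Subgroup.mem_zpowers ζ) (one_mem _)⟩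
      ⟨diagGL (-1, -1), diagGL_mem_monomialGL hneg hneg⟩
      ⟨diagGL (1, -1), diagGL_mem_monomialGL (one_mem _) hneg⟩ where
  le_center z hz := by
    obtain ⟨c, -, hc⟩ := mem_zpowers_diagGL.1 hz
    have hz : (z : GL (Fin 2) F) ∈ Subgroup.center _ :=
      Set.mem_of_eq_of_mem hc (diagGL_mem_center c)
    exact Subgroup.mem_center_iff.2 fun g => Subtype.ext (Subgroup.mem_center_iff.1 hz g)
  le z hz := by
    obtain ⟨c, hc, hz⟩ := mem_zpowers_diagGL.1 hz
    exact mem_zpowers_antidiagGL.2 ⟨c, hc, Or.inl hz⟩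
  mem := Subgroup.mem_zpowers _
  mem_or_exists r hr := by
    obtain ⟨z, hz, h⟩ := mem_zpowers_iff_exists_sq.1 hr
    rw [antidiagGL_one_sq] at hz
    obtain ⟨c, hc, rfl⟩ := mem_zpowers_diagGL.1 hz
    rcases h with h | h
    · exact Or.inl (Set.mem_of_eq_of_mem (s := Subgroup.zpowers (diagGL (ζ, ζ))) h hz)
    · exact Or.inr ⟨⟨_, diagGL_mem_monomialGL hc hc⟩, hz, Subtype.ext h⟩
  mem_central := mem_zpowers_diagGL.2 ⟨-1, hneg, rfl⟩
  conj := Subtype.ext <| by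
    simp [inv_diagGL, diagGL_mul_antidiagGL, antidiagGL_mul_diagGL]
  notMem h := by
    obtain ⟨c, -, h | h⟩ := mem_zpowers_antidiagGL.1 h
    · have hc := Prod.ext_iff.1 (diagGL_injective h)
      exact unit_ne_neg_self 1 (hc.1.trans hc.2.symm)
    · exact diagGL_ne_antidiagGL _ _ _ _ h
  mem_or_of_conj_mem y hy := mem_zpowers_antidiagGL_of_conj_mem y.2 hy

theorem exists_diagGL_conj_mem {a b c : Fˣ} (hb : b ∈ Subgroup.zpowers ζ)
    (hc : c ∈ Subgroup.zpowers ζ) (h : a * b = ζ * (c * c)) :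
    ∃ y ∈ monomialGL (Subgroup.zpowers ζ),
      y * antidiagGL a b * y⁻¹ ∈ Subgroup.zpowers (antidiagGL ζ 1) := by
  refine ⟨diagGL (b * c⁻¹, 1), diagGL_mem_monomialGL (mul_mem hb (inv_mem hc)) (one_mem _),
    mem_zpowers_antidiagGL.2 ⟨c, hc, Or.inr ?_⟩⟩
  rw [inv_diagGL, diagGL_mul_antidiagGL, antidiagGL_mul_diagGL, antidiagGL_inj]
  refine ⟨?_, by simp⟩
  rw [inv_one, mul_one, mul_right_comm, mul_comm b a, h, ← mul_assoc, mul_inv_cancel_right]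

theorem IsCuspidal.character_eq_zero_of_forall_conj_notMem [Finite F] [NeZero (2 : F)]
    {V : Type*} [AddCommGroup V] [Module ℂ V] {ρ : Representation ℂ (GL (Fin 2) F) V}
    (hρ : IsCuspidal ρ) {g : GL (Fin 2) F} (hg : g ∈ monomialGL (Subgroup.zpowers ζ))
    (hconj : ∀ y ∈ monomialGL (Subgroup.zpowers ζ),
      y * g * y⁻¹ ∉ Subgroup.zpowers (antidiagGL ζ 1)) : ρ.character g = 0 := by
  obtain ⟨a, ha, b, hb, rfl | rfl⟩ := hg
  · refine hρ.character_diagGL fun hab => hconj 1 (one_mem _) ?_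
    rw [one_mul, inv_one, mul_one, hab]
    exact mem_zpowers_antidiagGL.2 ⟨b, hb, Or.inl rfl⟩
  · obtain ⟨_, ⟨n, rfl⟩, h⟩ := mem_zpowers_iff_exists_sq.1 (mul_mem ha hb)
    simp only [sq, mul_zpow] at h
    rcases h with h | h
    · exact hρ.character_antidiagGL h
    · obtain ⟨y, hy, hmem⟩ := exists_diagGL_conj_mem hb (zpow_mem (Subgroup.mem_zpowers ζ) n) h
      exact absurd hmem (hconj y hy)

theorem exists_monoidHom_monomialGL [Finite F] (hneg : -1 ∈ Subgroup.zpowers ζ) {ω : Fˣ →* ℂ}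
    {t : ℂ} (ht : t ^ orderOf ζ = 1) (hsq : t ^ 2 = ω ζ) {n : ℕ} (hn : -ζ = ζ ^ n) :
    ∃ θ : monomialGL (Subgroup.zpowers ζ) →* ℂ,
      (∀ (g : monomialGL (Subgroup.zpowers ζ)) c, (g : GL (Fin 2) F) = diagGL (c, c) →
        c ∈ Subgroup.zpowers ζ → θ g = ω c) ∧
      ∀ g : monomialGL (Subgroup.zpowers ζ), (g : GL (Fin 2) F) = antidiagGL ζ 1 →
        θ g = t ^ n := by
  obtain ⟨α, hα⟩ := exists_monoidHom_zpowers ht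
  have hαpow (n : ℕ) (c : Subgroup.zpowers ζ) (hc : (c : Fˣ) = ζ ^ n) : α c = t ^ n := by
    rw [← hα, ← map_pow]
    exact congrArg α (Subtype.ext hc)
  let det : monomialGL (Subgroup.zpowers ζ) →* Subgroup.zpowers ζ :=
    (Matrix.GeneralLinearGroup.det.comp (Subgroup.subtype _)).codRestrict _
      fun g => det_mem_of_mem_monomialGL hneg g.2
  refine ⟨α.comp det, fun g c hg hc => ?_, fun g hg => hαpow n _ ?_⟩
  · obtain ⟨m, rfl⟩ := mem_powers_iff_mem_zpowers.2 hc
    change α (det g) = ω (ζ ^ m)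
    rw [map_pow, ← hsq, ← pow_mul]
    refine hαpow _ _ ?_
    change (g : GL (Fin 2) F).det = _
    rw [hg, det_diagGL, two_mul, pow_add]
  · change (g : GL (Fin 2) F).det = _
    rw [hg, det_antidiagGL, mul_one, hn]

theorem exists_monoidHom_pair_monomialGL [Finite F] {m : ℕ} (hm : m ≠ 0)
    (hζ : orderOf ζ = 2 * (2 * m)) {ω : Fˣ →* ℂ} (hω : ω (-1) = 1) :
    ∃ θ θ' : monomialGL (Subgroup.zpowers ζ) →* ℂ,
      (∀ (g : monomialGL (Subgroup.zpowers ζ)) c, (g : GL (Fin 2) F) = diagGL (c, c) →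
        c ∈ Subgroup.zpowers ζ → θ g = ω c) ∧
      (∀ (g : monomialGL (Subgroup.zpowers ζ)) c, (g : GL (Fin 2) F) = diagGL (c, c) →
        c ∈ Subgroup.zpowers ζ → θ' g = ω c) ∧
      ∀ g : monomialGL (Subgroup.zpowers ζ), (g : GL (Fin 2) F) = antidiagGL ζ 1 →
        θ' g = -θ g := by
  have hpow : ζ ^ (2 * m) = -1 := pow_eq_neg_one_of_orderOf_eq (by omega) hζ
  have hneg : -1 ∈ Subgroup.zpowers ζ := hpow ▸ pow_mem (Subgroup.mem_zpowers ζ) _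
  have hodd : -ζ = ζ ^ (2 * m + 1) := by rw [pow_succ, hpow, neg_one_mul]
  obtain ⟨t, ht⟩ := IsAlgClosed.exists_pow_nat_eq (ω ζ) two_pos
  have htorder : t ^ orderOf ζ = 1 := by rw [hζ, pow_mul, ht, ← map_pow, hpow, hω]
  have htorder' : (-t) ^ orderOf ζ = 1 := by rwa [(even_iff_two_dvd.2 ⟨_, hζ⟩).neg_pow]
  obtain ⟨θ, hθ, hθx⟩ := exists_monoidHom_monomialGL hneg htorder ht hodd
  obtain ⟨θ', hθ', hθ'x⟩ :=
    exists_monoidHom_monomialGL hneg htorder' ((neg_sq t).trans ht) hodd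
  refine ⟨θ, θ', hθ, hθ', fun g hg => ?_⟩
  rw [hθx g hg, hθ'x g hg, (odd_two_mul_add_one m).neg_pow]

variable [Fintype F]

theorem exists_orderOf_eq_ordProj (p : ℕ) :
    ∃ ζ : Fˣ, orderOf ζ = p ^ (Fintype.card F - 1).factorization p := by
  obtain ⟨g, hg⟩ := IsCyclic.exists_ofOrder_eq_natCard (α := Fˣ)
  rw [Nat.card_eq_fintype_card, Fintype.card_units] at hg
  exact ⟨g ^ (orderOf g / p ^ (Fintype.card F - 1).factorization p),
    orderOf_pow_orderOf_div (orderOf_pos g).ne' (hg ▸ Nat.ordProj_dvd _ p)⟩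

theorem not_two_dvd_index_monomialGL (hq : Fintype.card F % 4 = 1)
    (hζ : orderOf ζ = 2 ^ (Fintype.card F - 1).factorization 2) :
    ¬ 2 ∣ (monomialGL (Subgroup.zpowers ζ)).index := by
  have hq1 := Fintype.one_lt_card (α := F)
  set k := (Fintype.card F - 1) / 2 ^ (Fintype.card F - 1).factorization 2
  have hmul := (monomialGL (Subgroup.zpowers ζ)).index_mul_card
  have hsub : Fintype.card F - 1 = orderOf ζ * k := by
    rw [hζ, Nat.ordProj_mul_ordCompl_eq_self]
  obtain ⟨m, hm⟩ : ∃ m, Fintype.card F = 4 * m + 1 := ⟨Fintype.card F / 4, by omega⟩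
  have hindex : (monomialGL (Subgroup.zpowers ζ)).index = (4 * m + 1) * (k * k) * (2 * m + 1) := by
    rw [card_monomialGL, Nat.card_zpowers, card_GL_two, hsub, hm] at hmul
    refine Nat.eq_of_mul_eq_mul_right (mul_pos two_pos (mul_pos (orderOf_pos ζ) (orderOf_pos ζ))) ?_
    rw [hmul]
    ring
  have hk : ¬ 2 ∣ k := Nat.not_dvd_ordCompl Nat.prime_two (by omega)
  simp only [hindex, Nat.prime_two.dvd_mul, hk, or_false]
  omega

end Monomial

theorem IsCuspidal.character_mem_inducedSums_of_mod_four_eq_one {F V : Type} [Field F]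
    [Fintype F] [AddCommGroup V] [Module ℂ V] [FiniteDimensional ℂ V]
    {ρ : Representation ℂ (GL (Fin 2) F) V} [IsIrreducible ρ] (hρ : IsCuspidal ρ)
    (hq : Fintype.card F % 4 = 1) (P : Sylow 2 (GL (Fin 2) F)) :
    (fun x : P => ρ.character x) ∈ inducedSums P (2 ^ (finrank ℂ V).factorization 2) := by
  have := neZero_two_of_odd_card (F := F) (Nat.odd_iff.2 (by omega))
  have := nontrivial_of_isIrreducible ρ
  obtain ⟨ζ, hζ⟩ := exists_orderOf_eq_ordProj (F := F) 2
  obtain ⟨m, hm, hm0⟩ : ∃ m, orderOf ζ = 2 * (2 * m) ∧ m ≠ 0 := by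
    have hq1 := Fintype.one_lt_card (α := F)
    have hfour : 2 ^ 2 ∣ orderOf ζ := hζ ▸ pow_dvd_pow 2
      ((Nat.prime_two.pow_dvd_iff_le_factorization (by omega)).1 (by omega))
    have hpos := orderOf_pos ζ
    exact ⟨orderOf ζ / 4, by omega, by omega⟩
  have hneg : -1 ∈ Subgroup.zpowers ζ :=
    pow_eq_neg_one_of_orderOf_eq (by omega) hm ▸ pow_mem (Subgroup.mem_zpowers ζ) _
  have hcentral := nearlyCentral_monomialGL hneg
  have hindex := index_zpowers_antidiagGL (even_iff_two_dvd.2 ⟨_, hm⟩)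
  have hP : IsPGroup 2 (monomialGL (Subgroup.zpowers ζ)) := IsPGroup.of_card <| by
    rw [card_monomialGL, Nat.card_zpowers, hζ, ← pow_add, ← pow_succ']
  refine character_mem_inducedSums_of_isPGroup ρ P hP (not_two_dvd_index_monomialGL hq hζ) ?_
  obtain ⟨ω, hω⟩ := exists_scalar_character ρ
  choose c hc hcz using fun z : (Subgroup.zpowers (diagGL (ζ, ζ))).subgroupOf
    (monomialGL (Subgroup.zpowers ζ)) => mem_zpowers_diagGL.1 z.2
  rw [hρ.finrank_eq, ← hζ, ← hindex]
  refine hcentral.character_mem_inducedSums (ρ := ρ.comp (Subgroup.subtype _)) (ω := ω ∘ c)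
    (k := (Fintype.card F - 1) / orderOf ζ) (fun z => ?_) (fun g hg => ?_) ?_ fun hω1 => ?_
  · exact (congrArg ρ (hcz z)).trans (hω (c z))
  · exact hρ.character_eq_zero_of_forall_conj_notMem g.2 fun y hy => hg ⟨y, hy⟩
  · rw [hindex, hρ.finrank_eq, hζ, Nat.div_mul_cancel (Nat.ordProj_dvd _ 2)]
  · have hc1 : c ⟨_, hcentral.mem_central⟩ = -1 :=
      (Prod.ext_iff.1 (diagGL_injective (hcz ⟨_, hcentral.mem_central⟩))).1.symm
    have hω' : ω (-1) = 1 := by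
      rw [← hc1]
      exact hω1
    obtain ⟨θ, θ', hθ, hθ', hx⟩ := exists_monoidHom_pair_monomialGL hm0 hm hω'
    exact ⟨θ, θ', fun z => hθ _ _ (hcz z) (hc z), fun z => hθ' _ _ (hcz z) (hc z), hx _ rfl⟩

theorem strong_form_for_GL2
    (q : ℕ) (hq : IsPrimePow q) (hodd : Odd q)
    (F : Type) [Field F] [Fintype F] (hF : Fintype.card F = q)
    (P : Sylow 2 (Matrix.GeneralLinearGroup (Fin 2) F)) :
    ∀ (V : FDRep ℂ (Matrix.GeneralLinearGroup (Fin 2) F)), CategoryTheory.Simple V →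
      SumInducedProperty 2 (P : Subgroup (Matrix.GeneralLinearGroup (Fin 2) F))
        V.character (Module.finrank ℂ V) := by
  intro V hV
  subst hF
  have := isIrreducible_of_simple V
  refine sumInducedProperty_of_mem_inducedSums ?_
  by_cases hρ : IsCuspidal V.ρ
  · rcases Nat.odd_mod_four_iff.1 (Nat.odd_iff.1 hodd) with hmod | hmod
    · exact hρ.character_mem_inducedSums_of_mod_four_eq_one hmod P
    · exact hρ.character_mem_inducedSums_of_mod_four_eq_three hmod P
  · exact character_mem_inducedSums_of_not_isCuspidal hodd P hρ
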